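/- Let ν be the unique probability measure on LO_0 invariant for the process seen from the front (i.e. Q_t ν = ν for all t ≥ 0, where Q_t π is the pushforward under θ of ∫ P_t(ω,·) dπ(ω)). Then ν is absolutely continuous with respect to μ̃: every measurable set A with μ̃(A) = 0 satisfies ν(A) = 0. -/

import Mathlib

open MeasureTheory ProbabilityTheory Filter Topology

noncomputable section

/-- The configuration space of the East model on `ℤ`: `0` ↔ `false` (empty), `1` ↔ `true`. -/
abbrev Config : Type := ℤ → Bool

/-- The configuration `ω` flipped at site `x`. -/
def flipAt (ω : Config) (x : ℤ) : Config := fun y => if y = x then !ω x else ω y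

/-- `f` depends only on the coordinates in `S`. -/
def DependsOnF (f : Config → ℝ) (S : Set ℤ) : Prop :=
  ∀ ω ω' : Config, (∀ x ∈ S, ω x = ω' x) → f ω = f ω'

/-- The set `A` depends only on the coordinates in `S`. -/
def DependsOnSet (A : Set Config) (S : Set ℤ) : Prop :=
  ∀ ω ω' : Config, (∀ x ∈ S, ω x = ω' x) → (ω ∈ A ↔ ω' ∈ A)

/-- A cylinder (local) function: depends on finitely many coordinates. -/
def IsCylinder (f : Config → ℝ) : Prop := ∃ S : Finset ℤ, DependsOnF f ↑S

/-- The East generator at density `p` of ones. -/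
def eastGen (p : ℝ) (f : Config → ℝ) (ω : Config) : ℝ :=
  ∑' x : ℤ, (if ω (x + 1) = false then (1 : ℝ) else 0) *
    (if ω x = false then p else 1 - p) * (f (flipAt ω x) - f ω)

/-- Spatial translation: `(shift y ω) x = ω (x + y)`. -/
def shift (y : ℤ) (ω : Config) : Config := fun x => ω (x + y)

/-- Left-occupied configurations: identically `1` on a left half-line, with an empty site. -/
def LO : Set Config := {ω | (∃ y : ℤ, ∀ x < y, ω x = true) ∧ ∃ x, ω x = false}

/-- The front: position of the left-most zero. -/
def front (ω : Config) : ℤ := sInf {x : ℤ | ω x = false}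

/-- Left-occupied configurations with front at the origin. -/
def LO₀ : Set Config := {ω ∈ LO | front ω = 0}

/-- The configuration seen at distance `L` behind the front. -/
def θL (L : ℤ) (ω : Config) : Config := fun x =>
  if x < 0 then true else if x = 0 then false else ω (front ω + L + x)

/-- `f` averaged over the coordinate at site `1` w.r.t. Bernoulli(p). -/
def avg1 (p : ℝ) (f : Config → ℝ) (ω : Config) : ℝ :=
  p * f (Function.update ω 1 true) + (1 - p) * f (Function.update ω 1 false)

/-- The East process on `ℤ` at density `p`, together with its equilibrium measure. -/
structure EastProcess where
  /-- equilibrium density of ones -/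
  p : ℝ
  hp0 : 0 < p
  hp1 : p < 1
  /-- the Markov semigroup -/
  P : ℝ → Kernel Config Config
  markov : ∀ t : ℝ, IsMarkovKernel (P t)
  P0 : P 0 = Kernel.id
  semigroup : ∀ s t : ℝ, 0 ≤ s → 0 ≤ t → P (t + s) = (P s).comp (P t)
  feller : ∀ t : ℝ, 0 ≤ t → ∀ f : Config → ℝ, Continuous f →
    Continuous fun ω : Config => ∫ η, f η ∂(P t ω)
  timeCont : ∀ f : Config → ℝ, Continuous f → ∀ ω : Config,
    Continuous fun t : ℝ => ∫ η, f η ∂(P t ω)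
  shiftComm : ∀ t : ℝ, 0 ≤ t → ∀ y : ℤ, ∀ ω : Config,
    P t (shift y ω) = Measure.map (shift y) (P t ω)
  generator : ∀ f : Config → ℝ, IsCylinder f → ∀ ω : Config,
    HasDerivWithinAt (fun u : ℝ => ∫ η, f η ∂(P u ω)) (eastGen p f ω) (Set.Ici 0) 0
  /-- the product Bernoulli(p) measure -/
  μ : Measure Config
  μprob : IsProbabilityMeasure μ
  μprod : ∀ (S : Finset ℤ) (σ : ℤ → Bool),
    μ {ω : Config | ∀ x ∈ S, ω x = σ x} = ∏ x ∈ S, ENNReal.ofReal (if σ x then p else 1 - p)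
  /-- LO is stable for the dynamics -/
  loStable : ∀ t : ℝ, 0 ≤ t → ∀ ω ∈ LO, P t ω LO = 1

/-- The set of Rayleigh quotients defining the spectral gap. -/
def gapSet (E : EastProcess) : Set ℝ :=
  {r | ∃ f : Config → ℝ, IsCylinder f ∧ 0 < variance f E.μ ∧
    r = (-∫ ω, f ω * eastGen E.p f ω ∂E.μ) / variance f E.μ}

/-- The spectral gap of the East process. -/
def gap (E : EastProcess) : ℝ := sInf (gapSet E)

/-- The product measure `μ̃`: all ones on the negative half-line, a zero at the origin,
Bernoulli(p) on the positive half-line. -/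
def IsMuTilde (p : ℝ) (μt : Measure Config) : Prop :=
  IsProbabilityMeasure μt ∧
  ∀ (S : Finset ℤ) (σ : ℤ → Bool),
    μt {ω : Config | ∀ x ∈ S, ω x = σ x} =
      ∏ x ∈ S, ENNReal.ofReal
        (if x < 0 then (if σ x then 1 else 0)
         else if x = 0 then (if σ x then 0 else 1)
         else (if σ x then p else 1 - p))

/-- The law at time `t` of the process seen from the front started from `π`. -/
def Qt (E : EastProcess) (t : ℝ) (π : Measure Config) : Measure Config :=
  Measure.map (θL 0) (π.bind fun ω => E.P t ω)


namespace East

/-! ### Cylinder functions -/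

/-- Extension of a finite configuration by `true`. -/
def ext (W : Finset ℤ) (σ : W → Bool) : Config := fun x => if h : x ∈ W then σ ⟨x, h⟩ else true

/-- The cylinder of configurations agreeing with `ω` on `W`. -/
def cyl (W : Finset ℤ) (ω : Config) : Set Config := {η | ∀ x ∈ W, η x = ω x}

lemma ext_restrict (W : Finset ℤ) (ω : Config) : ∀ x ∈ W, ext W (W.restrict ω) x = ω x := by
  intro x hx; simp [ext, hx]

lemma dep_mono {f : Config → ℝ} {S T : Set ℤ} (h : DependsOnF f S) (hST : S ⊆ T) :
    DependsOnF f T := fun ω ω' hh => h ω ω' fun x hx => hh x (hST hx)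

lemma dep_eq {f : Config → ℝ} {W : Finset ℤ} (h : DependsOnF f ↑W) :
    f = (fun σ => f (ext W σ)) ∘ W.restrict := by
  funext ω
  exact h _ _ fun x hx => (ext_restrict W ω x hx).symm

lemma dep_continuous {f : Config → ℝ} {W : Finset ℤ} (h : DependsOnF f ↑W) : Continuous f := by
  rw [dep_eq h]
  exact continuous_of_discreteTopology.comp (Finset.continuous_restrict W)

lemma cont (f : Config → ℝ) (h : IsCylinder f) : Continuous f := by
  obtain ⟨W, h⟩ := h
  exact dep_continuous h

lemma meas {f : Config → ℝ} (h : IsCylinder f) : Measurable f := (cont f h).measurable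

lemma bdd {f : Config → ℝ} (h : IsCylinder f) : ∃ b, 0 ≤ b ∧ ∀ ω, |f ω| ≤ b := by
  obtain ⟨b, hb⟩ := (isCompact_univ.image (cont f h).abs).bddAbove
  refine ⟨max b 0, le_max_right _ _, fun ω => le_trans (hb ⟨ω, trivial, rfl⟩) (le_max_left _ _)⟩

lemma bdd_cont {f : Config → ℝ} (h : Continuous f) : ∃ b, 0 ≤ b ∧ ∀ ω, |f ω| ≤ b := by
  obtain ⟨b, hb⟩ := (isCompact_univ.image h.abs).bddAbove
  refine ⟨max b 0, le_max_right _ _, fun ω => le_trans (hb ⟨ω, trivial, rfl⟩) (le_max_left _ _)⟩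

lemma int_cont {f : Config → ℝ} (h : Continuous f) (m : Measure Config) [IsFiniteMeasure m] :
    Integrable f m := by
  obtain ⟨b, _, hb⟩ := bdd_cont h
  exact Integrable.of_bound h.measurable.aestronglyMeasurable b (ae_of_all _ hb)

lemma integ {f : Config → ℝ} (h : IsCylinder f) (m : Measure Config) [IsFiniteMeasure m] :
    Integrable f m := int_cont (cont f h) m

lemma cyl_const (c : ℝ) : IsCylinder (fun _ => c) := ⟨∅, fun _ _ _ => rfl⟩

lemma cyl_comp {f : Config → ℝ} (φ : ℝ → ℝ) (hf : IsCylinder f) :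
    IsCylinder (fun ω => φ (f ω)) := by
  obtain ⟨S, hS⟩ := hf
  exact ⟨S, fun ω ω' h => by simp only [hS ω ω' h]⟩

lemma cyl_comp₂ {f g : Config → ℝ} (φ : ℝ → ℝ → ℝ) (hf : IsCylinder f) (hg : IsCylinder g) :
    IsCylinder (fun ω => φ (f ω) (g ω)) := by
  obtain ⟨S, hS⟩ := hf
  obtain ⟨T, hT⟩ := hg
  refine ⟨S ∪ T, fun ω ω' h => ?_⟩
  show φ (f ω) (g ω) = φ (f ω') (g ω')
  rw [hS ω ω' fun x hx => h x (by simp at hx ⊢; tauto),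
    hT ω ω' fun x hx => h x (by simp at hx ⊢; tauto)]

lemma cyl_add {f g : Config → ℝ} (hf : IsCylinder f) (hg : IsCylinder g) :
    IsCylinder (fun ω => f ω + g ω) := cyl_comp₂ (· + ·) hf hg

lemma cyl_sub {f g : Config → ℝ} (hf : IsCylinder f) (hg : IsCylinder g) :
    IsCylinder (fun ω => f ω - g ω) := cyl_comp₂ (· - ·) hf hg

lemma cyl_mul {f g : Config → ℝ} (hf : IsCylinder f) (hg : IsCylinder g) :
    IsCylinder (fun ω => f ω * g ω) := cyl_comp₂ (· * ·) hf hg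

lemma cyl_neg {f : Config → ℝ} (hf : IsCylinder f) : IsCylinder (fun ω => - f ω) :=
  cyl_comp (fun x => -x) hf

lemma cyl_pow {f : Config → ℝ} (hf : IsCylinder f) (n : ℕ) : IsCylinder (fun ω => f ω ^ n) :=
  cyl_comp (fun x => x ^ n) hf

lemma cyl_sum {ι : Type*} (s : Finset ι) {f : ι → Config → ℝ} (hf : ∀ i ∈ s, IsCylinder (f i)) :
    IsCylinder (fun ω => ∑ i ∈ s, f i ω) := by
  classical
  induction s using Finset.induction_on with
  | empty => simpa using cyl_const 0
  | insert a s ha ih =>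
    simp only [Finset.sum_insert ha]
    exact cyl_add (hf a (by simp)) (ih fun i hi => hf i (by simp [hi]))

/-- A function of finitely many explicit coordinates after a coordinatewise local map. -/
lemma cyl_precomp {f : Config → ℝ} (hf : IsCylinder f) (T : Config → Config)
    (hT : ∀ x : ℤ, ∃ S : Finset ℤ, ∀ ω ω' : Config, (∀ y ∈ S, ω y = ω' y) → T ω x = T ω' x) :
    IsCylinder (fun ω => f (T ω)) := by
  obtain ⟨S, hS⟩ := hf
  choose U hU using hT
  refine ⟨S.biUnion U, fun ω ω' h => hS _ _ fun x hx => hU x _ _ fun y hy => h y ?_⟩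
  simp only [Finset.coe_biUnion, Set.mem_iUnion]
  exact ⟨x, hx, hy⟩

lemma cyl_ite (x : ℤ) (b : Bool) (a c : ℝ) : IsCylinder (fun ω => if ω x = b then a else c) :=
  ⟨{x}, fun ω ω' h => by simp only [h x (by simp)]⟩

lemma cyl_flip {f : Config → ℝ} (hf : IsCylinder f) (x : ℤ) :
    IsCylinder (fun ω => f (flipAt ω x)) := by
  refine cyl_precomp hf (fun ω => flipAt ω x) fun y => ⟨{x, y}, fun ω ω' h => ?_⟩
  simp [flipAt, h x (by simp), h y (by simp)]

lemma cyl_shift {f : Config → ℝ} (hf : IsCylinder f) (x : ℤ) :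
    IsCylinder (fun ω => f (shift x ω)) :=
  cyl_precomp hf (fun ω => shift x ω) fun y => ⟨{y + x}, fun ω ω' h => h _ (by simp)⟩

lemma cyl_update {f : Config → ℝ} (hf : IsCylinder f) (x : ℤ) (b : Bool) :
    IsCylinder (fun ω => f (Function.update ω x b)) := by
  refine cyl_precomp hf (fun ω => Function.update ω x b) fun y => ⟨{y}, fun ω ω' h => ?_⟩
  simp [Function.update_apply, h y (by simp)]

/-! ### Sums over a finite window -/

lemma meas_shift (y : ℤ) : Measurable (shift y) := by
  unfold shift; fun_prop

lemma meas_cyl (W : Finset ℤ) (ω : Config) : MeasurableSet (cyl W ω) := by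
  have : cyl W ω = ⋂ x ∈ W, {η : Config | η x = ω x} := by ext; simp [cyl]
  rw [this]
  exact Finset.measurableSet_biInter _ fun x _ => measurable_pi_apply x (MeasurableSet.singleton _)

lemma restrict_preimage (W : Finset ℤ) (σ : W → Bool) :
    (W.restrict : Config → (W → Bool)) ⁻¹' {σ} = cyl W (ext W σ) := by
  ext η
  simp only [Set.mem_preimage, Set.mem_singleton_iff, cyl, Set.mem_ofPred_eq, funext_iff]
  constructor
  · intro h x hx; simp [ext, hx, ← h ⟨x, hx⟩]
  · intro h x; have := h x.1 x.2; simpa [ext] using this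

lemma integral_window {W : Finset ℤ} {φ : Config → ℝ} (h : DependsOnF φ ↑W)
    (π : Measure Config) [IsFiniteMeasure π] :
    ∫ ω, φ ω ∂π = ∑ σ : W → Bool, π.real (cyl W (ext W σ)) * φ (ext W σ) := by
  have hm : Measurable (W.restrict : Config → (W → Bool)) := by fun_prop
  rw [dep_eq h]
  simp only [Function.comp_apply]
  rw [← integral_map (f := fun σ => φ (ext W σ)) hm.aemeasurable
    (measurable_of_finite _).aestronglyMeasurable, integral_fintype]
  · refine Finset.sum_congr rfl fun σ _ => ?_
    rw [map_measureReal_apply hm (MeasurableSet.singleton _), restrict_preimage, smul_eq_mul]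
    congr 1
    exact h _ _ fun x hx => (ext_restrict W _ x hx).symm
  · exact Integrable.of_finite

lemma ext_of_cyl {m₁ m₂ : Measure Config} [IsFiniteMeasure m₁] [IsFiniteMeasure m₂]
    (h : ∀ (S : Finset ℤ) (σ : Config), m₁ (cyl S σ) = m₂ (cyl S σ)) : m₁ = m₂ := by
  refine IsProjectiveLimit.unique (P := fun I => m₁.map I.restrict) (fun I => rfl) fun I => ?_
  have hm : Measurable (I.restrict : Config → (I → Bool)) := by fun_prop
  refine Measure.ext_of_singleton fun σ => ?_
  rw [Measure.map_apply hm (MeasurableSet.singleton _),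
    Measure.map_apply hm (MeasurableSet.singleton _), restrict_preimage, h]

/-- Density on a window. -/
def dens (W : Finset ℤ) (π μ : Measure Config) (ω : Config) : ℝ :=
  π.real (cyl W ω) / μ.real (cyl W ω)

lemma cyl_congr {W : Finset ℤ} {ω ω' : Config} (h : ∀ x ∈ W, ω x = ω' x) :
    cyl W ω = cyl W ω' := by
  ext η; simp only [cyl, Set.mem_ofPred_eq]
  exact forall₂_congr fun x hx => by rw [h x hx]

lemma dens_dep (W : Finset ℤ) (π μ : Measure Config) : DependsOnF (dens W π μ) ↑W := by
  intro ω ω' h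
  simp [dens, cyl_congr h]

lemma dens_nonneg (W : Finset ℤ) (π μ : Measure Config) (ω : Config) : 0 ≤ dens W π μ ω := by
  unfold dens; positivity

lemma integral_dens {W : Finset ℤ} {φ : Config → ℝ} (h : DependsOnF φ ↑W)
    (π μ : Measure Config) [IsFiniteMeasure π] [IsFiniteMeasure μ]
    (hpos : ∀ ω, 0 < μ.real (cyl W ω)) :
    ∫ ω, φ ω ∂π = ∫ ω, dens W π μ ω * φ ω ∂μ := by
  rw [integral_window h, integral_window (W := W)]
  · refine Finset.sum_congr rfl fun σ _ => ?_
    rw [dens, ← mul_assoc, mul_div_cancel₀ _ (hpos _).ne']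
  · intro ω ω' hh
    simp only [h _ _ hh, dens_dep W π μ _ _ hh]

end East

namespace East

/-! ### The Bernoulli measure -/

instance (E : EastProcess) : IsProbabilityMeasure E.μ := E.μprob
instance (E : EastProcess) (t : ℝ) : IsMarkovKernel (E.P t) := E.markov t

/-- Replace the coordinates in `W` of `ω` by those of `ζ`. -/
def glue (W : Finset ℤ) (ζ ω : Config) : Config := fun x => if x ∈ W then ζ x else ω x

/-- The East constraint at `x`. -/
def cc (x : ℤ) (ω : Config) : ℝ := if ω (x + 1) = false then (1 : ℝ) else 0

/-- The flip rate at `x`. -/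
def rr (p : ℝ) (x : ℤ) (ω : Config) : ℝ := if ω x = false then p else 1 - p

lemma cc_cyl (x : ℤ) : IsCylinder (cc x) := cyl_ite _ _ _ _
lemma rr_cyl (p : ℝ) (x : ℤ) : IsCylinder (rr p x) := cyl_ite _ _ _ _
lemma cc_nonneg (x : ℤ) (ω : Config) : 0 ≤ cc x ω := by unfold cc; split_ifs <;> norm_num
lemma cc_le (x : ℤ) (ω : Config) : cc x ω ≤ 1 := by unfold cc; split_ifs <;> norm_num
lemma rr_nonneg (E : EastProcess) (x : ℤ) (ω : Config) : 0 ≤ rr E.p x ω := by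
  have := E.hp0; have := E.hp1
  unfold rr; split_ifs <;> linarith
lemma rr_le (E : EastProcess) (x : ℤ) (ω : Config) : rr E.p x ω ≤ 1 := by
  have := E.hp0; have := E.hp1
  unfold rr; split_ifs <;> linarith

lemma cc_flip {x y : ℤ} (h : x + 1 ≠ y) (ω : Config) : cc x (flipAt ω y) = cc x ω := by
  simp [cc, flipAt, h]

lemma flip_flip (ω : Config) (x : ℤ) : flipAt (flipAt ω x) x = ω := by
  funext y; by_cases h : y = x <;> simp [flipAt, h]

lemma μ_cyl (E : EastProcess) (W : Finset ℤ) (σ : Config) :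
    E.μ (cyl W σ) = ∏ x ∈ W, ENNReal.ofReal (if σ x then E.p else 1 - E.p) := E.μprod W σ

lemma w_pos (E : EastProcess) (b : Bool) : 0 < (if b then E.p else 1 - E.p) := by
  have := E.hp0; have := E.hp1
  cases b <;> simp <;> linarith

lemma μ_cyl_real (E : EastProcess) (W : Finset ℤ) (σ : Config) :
    E.μ.real (cyl W σ) = ∏ x ∈ W, (if σ x then E.p else 1 - E.p) := by
  rw [Measure.real, μ_cyl, ENNReal.toReal_prod]
  exact Finset.prod_congr rfl fun x _ => ENNReal.toReal_ofReal (w_pos E _).le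

lemma μ_cyl_pos (E : EastProcess) (W : Finset ℤ) (σ : Config) : 0 < E.μ.real (cyl W σ) := by
  rw [μ_cyl_real]; exact Finset.prod_pos fun x _ => w_pos E _

lemma meas_glue (W : Finset ℤ) :
    Measurable (fun z : Config × Config => glue W z.1 z.2) := by
  refine measurable_pi_lambda _ fun x => ?_
  by_cases h : x ∈ W
  · simp only [glue, h, if_true]; fun_prop
  · simp only [glue, h, if_false]; fun_prop

lemma map_glue (E : EastProcess) (W : Finset ℤ) :
    Measure.map (fun z : Config × Config => glue W z.1 z.2) (E.μ.prod E.μ) = E.μ := by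
  classical
  have : IsFiniteMeasure
    (Measure.map (fun z : Config × Config => glue W z.1 z.2) (E.μ.prod E.μ)) := inferInstance
  refine ext_of_cyl fun S σ => ?_
  rw [Measure.map_apply (meas_glue W) (meas_cyl _ _)]
  have : (fun z : Config × Config => glue W z.1 z.2) ⁻¹' (cyl S σ) =
      cyl (S.filter (· ∈ W)) σ ×ˢ cyl (S.filter (· ∉ W)) σ := by
    ext z
    simp only [cyl, glue, Set.mem_preimage, Set.mem_ofPred_eq, Set.mem_prod, Finset.mem_filter]
    constructor
    · intro h
      refine ⟨fun x hx => ?_, fun x hx => ?_⟩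
      · simpa [hx.2] using h x hx.1
      · simpa [hx.2] using h x hx.1
    · rintro ⟨h1, h2⟩ x hx
      by_cases h : x ∈ W
      · simpa [h] using h1 x ⟨hx, h⟩
      · simpa [h] using h2 x ⟨hx, h⟩
  rw [this, Measure.prod_prod, μ_cyl, μ_cyl, μ_cyl]
  exact Finset.prod_filter_mul_prod_filter_not S (· ∈ W) _

lemma cont_glue (W : Finset ℤ) : Continuous (fun z : Config × Config => glue W z.1 z.2) := by
  refine continuous_pi fun x => ?_
  by_cases h : x ∈ W
  · simp only [glue, h, if_true]; fun_prop
  · simp only [glue, h, if_false]; fun_prop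

lemma integral_glue (E : EastProcess) (W : Finset ℤ) {φ : Config → ℝ} (h : IsCylinder φ) :
    ∫ ω, φ ω ∂E.μ = ∫ ω, ∫ ζ, φ (glue W ζ ω) ∂E.μ ∂E.μ := by
  conv_lhs => rw [← map_glue E W]
  rw [integral_map (meas_glue W).aemeasurable (meas h).aestronglyMeasurable]
  refine integral_prod_symm (fun z : Config × Config => φ (glue W z.1 z.2)) ?_
  obtain ⟨b, _, hb⟩ := bdd h
  exact Integrable.of_bound ((meas h).comp (meas_glue W)).aestronglyMeasurable b
    (ae_of_all _ fun z => hb _)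

lemma cyl_glue {f : Config → ℝ} (hf : IsCylinder f) (W : Finset ℤ) (ω : Config) :
    IsCylinder (fun ζ => f (glue W ζ ω)) := by
  refine cyl_precomp hf (fun ζ => glue W ζ ω) fun y => ⟨{y}, fun ζ ζ' h => ?_⟩
  simp [glue, h y (by simp)]

lemma cyl_glue' {f : Config → ℝ} (hf : IsCylinder f) (W : Finset ℤ) (ζ : Config) :
    IsCylinder (fun ω => f (glue W ζ ω)) := by
  refine cyl_precomp hf (fun ω => glue W ζ ω) fun y => ⟨{y}, fun ζ ζ' h => ?_⟩
  simp [glue, h y (by simp)]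

lemma cyl_glue_int (E : EastProcess) {f : Config → ℝ} (hf : IsCylinder f) (W : Finset ℤ) :
    IsCylinder (fun ω => ∫ ζ, f (glue W ζ ω) ∂E.μ) := by
  obtain ⟨S, hS⟩ := hf
  refine ⟨S, fun ω ω' h => ?_⟩
  refine integral_congr_ae (ae_of_all _ fun ζ => hS _ _ fun x hx => ?_)
  simp [glue, h x hx]

lemma cyl_singleton (x : ℤ) (ω : Config) : cyl {x} ω = {η | η x = ω x} := by
  ext; simp [cyl]

lemma integral_site (E : EastProcess) (x : ℤ) (φ : Bool → ℝ) :
    ∫ ζ : Config, φ (ζ x) ∂E.μ = E.p * φ true + (1 - E.p) * φ false := by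
  have hm : Measurable (fun ζ : Config => ζ x) := measurable_pi_apply x
  rw [← integral_map (φ := fun ζ : Config => ζ x) (f := φ) hm.aemeasurable
    (measurable_of_finite _).aestronglyMeasurable, integral_fintype Integrable.of_finite]
  have : ∀ b : Bool, (Measure.map (fun ζ : Config => ζ x) E.μ).real {b} =
      if b then E.p else 1 - E.p := by
    intro b
    rw [map_measureReal_apply hm (MeasurableSet.singleton _)]
    have := μ_cyl_real E {x} (fun _ => b)
    rw [cyl_singleton, Finset.prod_singleton] at this
    exact this
  simp [this]

lemma resample (E : EastProcess) (x : ℤ) {φ : Config → ℝ} (h : IsCylinder φ) :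
    ∫ ω, φ ω ∂E.μ = ∫ ω, (E.p * φ (Function.update ω x true) +
      (1 - E.p) * φ (Function.update ω x false)) ∂E.μ := by
  rw [integral_glue E {x} h]
  refine integral_congr_ae (ae_of_all _ fun ω => ?_)
  have : ∀ ζ : Config, φ (glue {x} ζ ω) = (fun b => φ (Function.update ω x b)) (ζ x) := by
    intro ζ
    congr 1
    funext y
    by_cases hy : y = x
    · subst hy; simp [glue]
    · simp [glue, hy]
  simp only [this]
  exact integral_site E x (fun b => φ (Function.update ω x b))

lemma flip_update (ω : Config) (x : ℤ) (b : Bool) :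
    flipAt (Function.update ω x b) x = Function.update ω x (!b) := by
  funext y; by_cases h : y = x <;> simp [flipAt, h]

lemma reversible (E : EastProcess) (x : ℤ) {h : Config → ℝ} (hh : IsCylinder h) :
    ∫ ω, rr E.p x ω * h (flipAt ω x) ∂E.μ = ∫ ω, rr E.p x ω * h ω ∂E.μ := by
  rw [resample E x (cyl_mul (rr_cyl _ _) (cyl_flip hh x)),
    resample E x (cyl_mul (rr_cyl _ _) hh)]
  refine integral_congr_ae (ae_of_all _ fun ω => ?_)
  simp [rr, flip_update]
  ring

/-- Integration by parts for a single flip. -/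
lemma byparts (E : EastProcess) (x : ℤ) {w g φ : Config → ℝ} (hw : IsCylinder w)
    (hg : IsCylinder g) (hφ : IsCylinder φ) (hwx : ∀ ω, w (flipAt ω x) = w ω) :
    ∫ ω, g ω * (w ω * rr E.p x ω * (φ (flipAt ω x) - φ ω)) ∂E.μ =
      -(1 / 2) * ∫ ω, w ω * rr E.p x ω * ((g (flipAt ω x) - g ω) * (φ (flipAt ω x) - φ ω)) ∂E.μ := by
  have h1 := reversible E x (h := fun ω => g ω * (w ω * (φ (flipAt ω x) - φ ω)))
    (cyl_mul hg (cyl_mul hw (cyl_sub (cyl_flip hφ x) hφ)))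
  simp only [flip_flip, hwx] at h1
  have e : ∀ ω, w ω * rr E.p x ω * ((g (flipAt ω x) - g ω) * (φ (flipAt ω x) - φ ω)) =
      -(rr E.p x ω * (g (flipAt ω x) * (w ω * (φ ω - φ (flipAt ω x))))) -
        rr E.p x ω * (g ω * (w ω * (φ (flipAt ω x) - φ ω))) := fun ω => by ring
  simp only [e]
  rw [integral_sub, integral_neg, h1]
  · have e2 : ∀ ω, g ω * (w ω * rr E.p x ω * (φ (flipAt ω x) - φ ω)) =
      rr E.p x ω * (g ω * (w ω * (φ (flipAt ω x) - φ ω))) := fun ω => by ring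
    simp only [e2]
    ring
  · refine (integ (cyl_mul (rr_cyl _ _) (cyl_mul (cyl_flip hg x)
      (cyl_mul hw (cyl_sub hφ (cyl_flip hφ x))))) _).neg
  · exact integ (cyl_mul (rr_cyl _ _) (cyl_mul hg
      (cyl_mul hw (cyl_sub (cyl_flip hφ x) hφ)))) _

lemma dep_flip {f : Config → ℝ} {S : Set ℤ} (h : DependsOnF f S) {x : ℤ} (hx : x ∉ S)
    (ω : Config) : f (flipAt ω x) = f ω :=
  h _ _ fun y hy => by
    have : y ≠ x := fun e => hx (e ▸ hy)
    simp [flipAt, this]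

lemma eastGen_sum (p : ℝ) {f : Config → ℝ} {S : Finset ℤ} (h : DependsOnF f ↑S) (ω : Config) :
    eastGen p f ω = ∑ x ∈ S, cc x ω * rr p x ω * (f (flipAt ω x) - f ω) := by
  unfold eastGen
  refine tsum_eq_sum fun x hx => ?_
  rw [dep_flip h (by simpa using hx)]
  simp

lemma eastGen_cyl (p : ℝ) {f : Config → ℝ} (hf : IsCylinder f) : IsCylinder (eastGen p f) := by
  obtain ⟨S, hS⟩ := id hf
  have : eastGen p f = fun ω => ∑ x ∈ S, cc x ω * rr p x ω * (f (flipAt ω x) - f ω) :=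
    funext fun ω => eastGen_sum p hS ω
  rw [this]
  exact cyl_sum _ fun x _ => cyl_mul (cyl_mul (cc_cyl x) (rr_cyl p x)) (cyl_sub (cyl_flip hf x) hf)

lemma dirichlet (E : EastProcess) {f : Config → ℝ} {S : Finset ℤ} (h : DependsOnF f ↑S) :
    -∫ ω, f ω * eastGen E.p f ω ∂E.μ =
      (1 / 2) * ∑ x ∈ S, ∫ ω, cc x ω * rr E.p x ω * (f (flipAt ω x) - f ω) ^ 2 ∂E.μ := by
  have hf : IsCylinder f := ⟨S, h⟩
  simp only [eastGen_sum E.p h, Finset.mul_sum]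
  rw [integral_finsetSum]
  · rw [← Finset.sum_neg_distrib]
    refine Finset.sum_congr rfl fun x _ => ?_
    rw [byparts E x (cc_cyl x) hf hf (fun ω => cc_flip (by omega) ω)]
    simp only [← pow_two]
    ring
  · exact fun x _ => integ (cyl_mul hf (cyl_mul (cyl_mul (cc_cyl x) (rr_cyl _ x))
      (cyl_sub (cyl_flip hf x) hf))) _

lemma gap_bound (E : EastProcess) {f : Config → ℝ} {S : Finset ℤ} (h : DependsOnF f ↑S) :
    gap E * variance f E.μ ≤
      (1 / 2) * ∑ x ∈ S, ∫ ω, cc x ω * rr E.p x ω * (f (flipAt ω x) - f ω) ^ 2 ∂E.μ := by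
  have nn : ∀ (f : Config → ℝ) (S : Finset ℤ),
      0 ≤ (1 / 2 : ℝ) * ∑ x ∈ S, ∫ ω, cc x ω * rr E.p x ω * (f (flipAt ω x) - f ω) ^ 2 ∂E.μ := by
    intro f S
    refine mul_nonneg (by norm_num) (Finset.sum_nonneg fun x _ => integral_nonneg fun ω => ?_)
    exact mul_nonneg (mul_nonneg (cc_nonneg _ _) (rr_nonneg E _ _)) (sq_nonneg _)
  rcases (variance_nonneg f E.μ).eq_or_lt with h0 | h0
  · rw [← h0, mul_zero]; exact nn f S
  · rw [← dirichlet E h, ← le_div_iff₀ h0]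
    refine csInf_le ⟨0, ?_⟩ ⟨f, ⟨S, h⟩, h0, rfl⟩
    rintro r ⟨f, ⟨S, h⟩, hv, rfl⟩
    rw [dirichlet E h]
    exact div_nonneg (nn f S) hv.le

lemma map_shift (E : EastProcess) (y : ℤ) : Measure.map (shift y) E.μ = E.μ := by
  have : IsFiniteMeasure (Measure.map (shift y) E.μ) := inferInstance
  refine ext_of_cyl fun S σ => ?_
  rw [Measure.map_apply (meas_shift y) (meas_cyl _ _)]
  have : shift y ⁻¹' (cyl S σ) = cyl (S.map (addRightEmbedding y)) (shift (-y) σ) := by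
    ext ω
    simp [cyl, shift]
  rw [this, μ_cyl, μ_cyl, Finset.prod_map]
  simp [shift]

lemma integral_shift (E : EastProcess) (y : ℤ) {φ : Config → ℝ} (h : IsCylinder φ) :
    ∫ ω, φ (shift y ω) ∂E.μ = ∫ ω, φ ω ∂E.μ := by
  conv_rhs => rw [← map_shift E y]
  rw [integral_map (meas_shift y).aemeasurable (meas h).aestronglyMeasurable]

end East

namespace East

/-! ### The Dynkin formula -/

/-- The semigroup acting on functions. -/
def PE (E : EastProcess) (t : ℝ) (f : Config → ℝ) (ω : Config) : ℝ := ∫ η, f η ∂(E.P t ω)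

lemma PE_zero (E : EastProcess) {f : Config → ℝ} (_hf : Continuous f) (ω : Config) :
    PE E 0 f ω = f ω := by
  unfold PE
  rw [E.P0, Kernel.id_apply, integral_dirac]

lemma PE_bound (E : EastProcess) (t : ℝ) {f : Config → ℝ} {b : ℝ} (hb : ∀ ω, |f ω| ≤ b)
    (ω : Config) : |PE E t f ω| ≤ b := by
  unfold PE
  have := norm_integral_le_of_norm_le_const (μ := E.P t ω) (f := f) (C := b) (ae_of_all _ hb)
  simpa using this

lemma PE_mono (E : EastProcess) (t : ℝ) {f g : Config → ℝ} (hf : Continuous f) (hg : Continuous g)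
    (h : ∀ ω, f ω ≤ g ω) (ω : Config) : PE E t f ω ≤ PE E t g ω :=
  integral_mono (int_cont hf _) (int_cont hg _) h

lemma PE_add (E : EastProcess) (t : ℝ) {f : Config → ℝ} (hf : Continuous f) {s : ℝ}
    (ht : 0 ≤ t) (hs : 0 ≤ s) (ω : Config) :
    PE E (t + s) f ω = PE E t (PE E s f) ω := by
  unfold PE
  rw [E.semigroup s t hs ht, Kernel.integral_comp]
  rw [← E.semigroup s t hs ht]
  exact int_cont hf _

lemma PE_meas (E : EastProcess) (t : ℝ) {f : Config → ℝ} (hf : Continuous f) :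
    Measurable (PE E t f) := by
  have : StronglyMeasurable f := hf.stronglyMeasurable
  exact this.integral_kernel.measurable

lemma PE_jmeas (E : EastProcess) {f : Config → ℝ} (hf : Continuous f) :
    Measurable (fun z : ℝ × Config => PE E z.1 f z.2) :=
  measurable_uncurry_of_continuous_of_measurable (u := fun t ω => PE E t f ω)
    (fun ω => E.timeCont f hf ω) (fun t => PE_meas E t hf)

/-- The resolvent at 1. -/
def Ures (E : EastProcess) (f : Config → ℝ) (ω : Config) : ℝ :=
  ∫ s in Set.Ioi (0:ℝ), Real.exp (-s) * PE E s f ω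

lemma exp_int : Integrable (fun s : ℝ => Real.exp (-s)) (volume.restrict (Set.Ioi (0:ℝ))) :=
  integrableOn_exp_neg_Ioi 0

lemma Ures_integrable (E : EastProcess) {f : Config → ℝ} (hf : Continuous f) (ω : Config) :
    IntegrableOn (fun s => Real.exp (-s) * PE E s f ω) (Set.Ioi 0) := by
  obtain ⟨b, hb0, hb⟩ := bdd_cont hf
  have hc : Continuous (fun s => PE E s f ω) := E.timeCont f hf ω
  refine Integrable.mono' (g := fun s => Real.exp (-s) * b) (exp_int.mul_const b) ?_ ?_
  · exact (by fun_prop : Continuous fun s => Real.exp (-s) * PE E s f ω).aestronglyMeasurable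
  · refine ae_of_all _ fun s => ?_
    rw [norm_mul, Real.norm_eq_abs, Real.abs_exp]
    exact mul_le_mul_of_nonneg_left (PE_bound E s hb ω) (Real.exp_nonneg _)

lemma Ures_cont (E : EastProcess) {f : Config → ℝ} (hf : Continuous f) :
    Continuous (Ures E f) := by
  obtain ⟨b, hb0, hb⟩ := bdd_cont hf
  refine continuous_of_dominated (bound := fun s => Real.exp (-s) * b) ?_ ?_
    (exp_int.mul_const b) ?_
  · intro ω
    exact (Ures_integrable E hf ω).aestronglyMeasurable
  · intro ω
    refine ae_of_all _ fun s => ?_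
    rw [norm_mul, Real.norm_eq_abs, Real.abs_exp]
    exact mul_le_mul_of_nonneg_left (PE_bound E s hb ω) (Real.exp_nonneg _)
  · refine (ae_restrict_mem measurableSet_Ioi).mono fun s hs => ?_
    have : Continuous (fun ω => PE E s f ω) := E.feller s (le_of_lt hs) f hf
    fun_prop

lemma PE_Ures (E : EastProcess) {f : Config → ℝ} (hf : Continuous f) {h : ℝ} (hh : 0 ≤ h)
    (ω : Config) :
    PE E h (Ures E f) ω =
      Real.exp h * (Ures E f ω - ∫ s in (0:ℝ)..h, Real.exp (-s) * PE E s f ω) := by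
  obtain ⟨b, hb0, hb⟩ := bdd_cont hf
  have h1 : PE E h (Ures E f) ω
      = ∫ s in Set.Ioi (0:ℝ), ∫ η, Real.exp (-s) * PE E s f η ∂(E.P h ω) := by
    unfold PE Ures
    refine integral_integral_swap ?_
    have hm : Measurable (fun z : Config × ℝ => Real.exp (-z.2) * PE E z.2 f z.1) := by
      have := (PE_jmeas E hf).comp measurable_swap
      exact (by fun_prop : Measurable fun z : Config × ℝ => Real.exp (-z.2)).mul this
    refine Integrable.mono' (g := fun z : Config × ℝ => b * Real.exp (-z.2))
      ((integrable_const b).mul_prod exp_int) hm.aestronglyMeasurable (ae_of_all _ fun z => ?_)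
    show ‖Real.exp (-z.2) * PE E z.2 f z.1‖ ≤ _
    rw [norm_mul, Real.norm_eq_abs, Real.abs_exp, mul_comm b]
    exact mul_le_mul_of_nonneg_left (PE_bound E z.2 hb z.1) (Real.exp_nonneg _)
  have h2 : PE E h (Ures E f) ω
      = ∫ s in Set.Ioi (0:ℝ), Real.exp h * (Real.exp (-(s + h)) * PE E (s + h) f ω) := by
    rw [h1]
    refine setIntegral_congr_fun measurableSet_Ioi fun s hs => ?_
    show ∫ η, Real.exp (-s) * PE E s f η ∂(E.P h ω) = _
    rw [integral_const_mul]
    have : ∫ η, PE E s f η ∂(E.P h ω) = PE E (s + h) f ω := by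
      rw [add_comm s h, PE_add E h hf hh (le_of_lt hs)]; rfl
    rw [this, ← mul_assoc, ← Real.exp_add]
    congr 2; ring
  rw [h2, integral_const_mul]
  congr 1
  have h3 : ∫ s in Set.Ioi (0:ℝ), Real.exp (-(s + h)) * PE E (s + h) f ω
      = ∫ s in Set.Ioi h, Real.exp (-s) * PE E s f ω := by
    have := (measurePreserving_add_right volume h).setIntegral_preimage_emb
      (MeasurableEquiv.addRight h).measurableEmbedding
      (fun s => Real.exp (-s) * PE E s f ω) (Set.Ioi h)
    rw [← this]
    simp
  rw [h3]
  have h4 := intervalIntegral.integral_interval_add_Ioi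
    (Ures_integrable E hf ω) ((Ures_integrable E hf ω).mono_set (Set.Ioi_subset_Ioi hh))
  unfold Ures
  linarith

lemma D_deriv {φ : ℝ → ℝ} (hφ : Continuous φ) (c h : ℝ) :
    HasDerivAt (fun h => Real.exp h * (c - ∫ s in (0:ℝ)..h, Real.exp (-s) * φ s))
      (Real.exp h * (c - ∫ s in (0:ℝ)..h, Real.exp (-s) * φ s) - φ h) h := by
  have hc : Continuous (fun s => Real.exp (-s) * φ s) := by fun_prop
  have h1 := (hc.integral_hasStrictDerivAt 0 h).hasDerivAt
  have h2 := (Real.hasDerivAt_exp h).mul (h1.const_sub c)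
  refine h2.congr_deriv ?_
  have : Real.exp h * Real.exp (-h) = 1 := by rw [← Real.exp_add]; simp
  linear_combination (-φ h) * this

lemma max_principle (E : EastProcess) {F : Config → ℝ} (hF : IsCylinder F) (ω : Config) :
    F ω ≤ Ures E (fun ω => F ω - eastGen E.p F ω) ω := by
  set f := fun ω => F ω - eastGen E.p F ω with hf
  have hfc : Continuous f := cont _ (cyl_sub hF (eastGen_cyl E.p hF))
  have hwc : Continuous (fun ω => F ω - Ures E f ω) := (cont _ hF).sub (Ures_cont E hfc)
  obtain ⟨ω₀, -, hmax⟩ := isCompact_univ.exists_isMaxOn ⟨ω, trivial⟩ hwc.continuousOn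
  have hmax' : ∀ η, F η - Ures E f η ≤ F ω₀ - Ures E f ω₀ := fun η => hmax (Set.mem_univ η)
  have hd1 : HasDerivWithinAt (fun u : ℝ => PE E u F ω₀) (eastGen E.p F ω₀) (Set.Ici 0) 0 :=
    E.generator F hF ω₀
  have hφ : Continuous (fun s => PE E s f ω₀) := E.timeCont f hfc ω₀
  have hd2 : HasDerivWithinAt (fun u : ℝ => PE E u (Ures E f) ω₀) (Ures E f ω₀ - f ω₀)
      (Set.Ici 0) 0 := by
    have := (D_deriv hφ (Ures E f ω₀) 0).hasDerivWithinAt (s := Set.Ici 0)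
    refine (this.congr (fun u hu => PE_Ures E hfc hu ω₀) (PE_Ures E hfc le_rfl ω₀)).congr_deriv ?_
    simp [PE_zero E hfc]
  have hd := hd1.sub hd2
  have hle : ∀ u, ((fun u : ℝ => PE E u F ω₀) - fun u => PE E u (Ures E f) ω₀) u
      ≤ F ω₀ - Ures E f ω₀ := by
    intro u
    show (∫ η, F η ∂(E.P u ω₀)) - ∫ η, Ures E f η ∂(E.P u ω₀) ≤ _
    rw [← integral_sub (int_cont (cont _ hF) _) (int_cont (Ures_cont E hfc) _)]
    refine (integral_mono (int_cont hwc _) (integrable_const _) hmax').trans ?_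
    simp
  have h0 : ((fun u : ℝ => PE E u F ω₀) - fun u => PE E u (Ures E f) ω₀) 0
      = F ω₀ - Ures E f ω₀ := by
    simp only [Pi.sub_apply]; rw [PE_zero E (cont _ hF), PE_zero E (Ures_cont E hfc)]
  have hneg : eastGen E.p F ω₀ - (Ures E f ω₀ - f ω₀) ≤ 0 := by
    have hd' := hd.mono Set.Ioi_subset_Ici_self
    rw [hasDerivWithinAt_iff_tendsto_slope] at hd'
    simp only [Set.mem_Ioi, lt_irrefl, not_false_eq_true, Set.sdiff_singleton_eq_self] at hd'
    refine le_of_tendsto hd' (eventually_nhdsWithin_of_forall fun u hu => ?_)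
    have hu : 0 < u := hu
    simp only [slope, sub_zero, vsub_eq_sub, smul_eq_mul, h0]
    exact mul_nonpos_of_nonneg_of_nonpos (inv_nonneg.2 hu.le) (sub_nonpos.2 (hle u))
  have := hmax' ω
  simp only [hf] at hneg this ⊢
  linarith

lemma resolvent (E : EastProcess) {F : Config → ℝ} (hF : IsCylinder F) (ω : Config) :
    F ω = Ures E (fun ω => F ω - eastGen E.p F ω) ω := by
  refine le_antisymm (max_principle E hF ω) ?_
  have h := max_principle E (cyl_neg hF) ω
  have h1 : (fun ω => -F ω - eastGen E.p (fun ω => - F ω) ω)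
      = fun ω => -(F ω - eastGen E.p F ω) := by
    funext η
    have : eastGen E.p (fun ω => - F ω) η = - eastGen E.p F η := by
      unfold eastGen
      rw [← tsum_neg]
      congr 1; funext x; ring
    rw [this]; ring
  have h2 : Ures E (fun ω => -(F ω - eastGen E.p F ω)) ω
      = - Ures E (fun ω => F ω - eastGen E.p F ω) ω := by
    unfold Ures PE
    simp only [integral_neg, mul_neg]
  rw [h1, h2] at h
  linarith

lemma dynkin (E : EastProcess) {F : Config → ℝ} (hF : IsCylinder F) {t : ℝ} (ht : 0 ≤ t)
    (ω : Config) :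
    PE E t F ω - F ω = ∫ s in (0:ℝ)..t, PE E s (eastGen E.p F) ω := by
  set f := fun ω => F ω - eastGen E.p F ω with hf
  have hGc : Continuous (eastGen E.p F) := cont _ (eastGen_cyl E.p hF)
  have hfc : Continuous f := cont _ (cyl_sub hF (eastGen_cyl E.p hF))
  have hφ : Continuous (fun s => PE E s f ω) := E.timeCont f hfc ω
  have hψ : Continuous (fun s => PE E s (eastGen E.p F) ω) := E.timeCont _ hGc ω
  have hFU : Ures E f = F := funext fun ω => (resolvent E hF ω).symm
  have hD : ∀ h, 0 ≤ h → PE E h F ω =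
      Real.exp h * (F ω - ∫ s in (0:ℝ)..h, Real.exp (-s) * PE E s f ω) := by
    intro h hh
    have := PE_Ures E hfc hh ω
    rwa [hFU] at this
  have hsub : ∀ s, PE E s f ω = PE E s F ω - PE E s (eastGen E.p F) ω := fun s =>
    integral_sub (int_cont (cont _ hF) _) (int_cont hGc _)
  have key := intervalIntegral.integral_eq_sub_of_hasDerivAt (a := 0) (b := t)
    (f := fun h => Real.exp h * (F ω - ∫ s in (0:ℝ)..h, Real.exp (-s) * PE E s f ω))
    (f' := fun s => PE E s (eastGen E.p F) ω) ?_ (hψ.intervalIntegrable _ _)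
  · rw [key, hD t ht]; simp
  · intro s hs
    rw [Set.uIcc_of_le ht] at hs
    refine (D_deriv hφ (F ω) s).congr_deriv ?_
    rw [← hD s hs.1, hsub]; ring

/-- Comparison. -/
lemma dynkin_le (E : EastProcess) {F G : Config → ℝ} (hF : IsCylinder F) (hG : IsCylinder G)
    (hle : ∀ ω, eastGen E.p F ω ≤ G ω) {t : ℝ} (ht : 0 ≤ t) (ω : Config) :
    PE E t F ω ≤ F ω + ∫ s in (0:ℝ)..t, PE E s G ω := by
  have h := dynkin E hF ht ω
  have hGc : Continuous (eastGen E.p F) := cont _ (eastGen_cyl E.p hF)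
  have : ∫ s in (0:ℝ)..t, PE E s (eastGen E.p F) ω ≤ ∫ s in (0:ℝ)..t, PE E s G ω :=
    intervalIntegral.integral_mono_on ht ((E.timeCont _ hGc ω).intervalIntegrable _ _)
      ((E.timeCont _ (cont _ hG) ω).intervalIntegrable _ _)
      fun s _ => PE_mono E s hGc (cont _ hG) hle ω
  linarith

lemma PE_lip (E : EastProcess) {F : Config → ℝ} (hF : IsCylinder F) :
    ∃ b, 0 ≤ b ∧ ∀ t, 0 ≤ t → ∀ ω, |PE E t F ω - F ω| ≤ b * t := by
  obtain ⟨b, hb0, hb⟩ := bdd (eastGen_cyl E.p hF)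
  refine ⟨b, hb0, fun t ht ω => ?_⟩
  rw [dynkin E hF ht ω]
  have := intervalIntegral.norm_integral_le_of_norm_le_const (a := 0) (b := t) (C := b)
    (f := fun s => PE E s (eastGen E.p F) ω) fun s _ => PE_bound E s hb ω
  simpa [abs_of_nonneg ht] using this

/-- Integrated generator: right derivative at zero of `t ↦ m(P_t F)`. -/
lemma gen_int (E : EastProcess) {F : Config → ℝ} (hF : IsCylinder F) (m : Measure Config)
    [IsFiniteMeasure m] :
    Tendsto (fun t : ℝ => ∫ ω, (PE E t F ω - F ω) / t ∂m) (𝓝[>] 0)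
      (𝓝 (∫ ω, eastGen E.p F ω ∂m)) := by
  obtain ⟨b, hb0, hb⟩ := PE_lip E hF
  refine tendsto_integral_filter_of_dominated_convergence (fun _ => b) ?_ ?_
    (integrable_const _) ?_
  · refine Eventually.of_forall fun t => ?_
    exact (((PE_meas E t (cont _ hF)).sub (meas hF)).div_const t).aestronglyMeasurable
  · refine eventually_nhdsWithin_of_forall fun t ht => ae_of_all _ fun ω => ?_
    have ht : 0 < t := ht
    rw [Real.norm_eq_abs, abs_div, abs_of_pos ht, div_le_iff₀ ht]
    exact hb t ht.le ω
  · refine ae_of_all _ fun ω => ?_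
    have := (E.generator F hF ω).mono Set.Ioi_subset_Ici_self
    rw [hasDerivWithinAt_iff_tendsto_slope] at this
    simp only [Set.mem_Ioi, lt_irrefl, not_false_eq_true, Set.sdiff_singleton_eq_self] at this
    refine this.congr fun t => ?_
    have h0 := PE_zero E (cont _ hF) ω
    unfold PE at h0
    simp only [slope, sub_zero, vsub_eq_sub, smul_eq_mul]
    rw [h0]
    unfold PE
    rw [div_eq_inv_mul]

end East

namespace East

/-! ### Finite speed estimates -/

/-- Indicator of a zero at `x`. -/
def zz (x : ℤ) (ω : Config) : ℝ := if ω x = false then (1 : ℝ) else 0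

lemma zz_cyl (x : ℤ) : IsCylinder (zz x) := cyl_ite _ _ _ _
lemma zz_nonneg (x : ℤ) (ω : Config) : 0 ≤ zz x ω := by unfold zz; split_ifs <;> norm_num
lemma zz_le (x : ℤ) (ω : Config) : zz x ω ≤ 1 := by unfold zz; split_ifs <;> norm_num

lemma gen_zz (E : EastProcess) (x : ℤ) (ω : Config) : eastGen E.p (zz x) ω ≤ zz (x + 1) ω := by
  have hd : DependsOnF (zz x) ↑({x} : Finset ℤ) := fun ω ω' h => by
    simp only [zz, h x (by simp)]
  rw [eastGen_sum E.p hd ω, Finset.sum_singleton]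
  have h1 := cc_nonneg x ω
  have h2 := rr_nonneg E x ω
  have h3 := rr_le E x ω
  have h4 : zz x (flipAt ω x) - zz x ω ≤ 1 := by
    have := zz_le x (flipAt ω x); have := zz_nonneg x ω; linarith
  have h5 : cc x ω = zz (x + 1) ω := rfl
  rw [← h5]
  calc cc x ω * rr E.p x ω * (zz x (flipAt ω x) - zz x ω)
      ≤ cc x ω * rr E.p x ω * 1 := mul_le_mul_of_nonneg_left h4 (mul_nonneg h1 h2)
    _ ≤ cc x ω := by rw [mul_one]; exact mul_le_of_le_one_right h1 h3

lemma pow_int (k : ℕ) (t : ℝ) :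
    ∫ s in (0:ℝ)..t, s ^ k / (k.factorial : ℝ) = t ^ (k + 1) / ((k + 1).factorial : ℝ) := by
  rw [intervalIntegral.integral_div, integral_pow, Nat.factorial_succ]
  push_cast
  field_simp
  simp

lemma zbound (E : EastProcess) (k : ℕ) : ∀ (x : ℤ) (ω : Config), (∀ i : ℕ, i < k → ω (x + i) = true) →
    ∀ t : ℝ, 0 ≤ t → PE E t (zz x) ω ≤ t ^ k / (k.factorial : ℝ) := by
  induction k with
  | zero =>
    intro x ω _ t _
    simp only [pow_zero, Nat.factorial_zero, Nat.cast_one, div_one]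
    refine le_trans (le_abs_self _) (PE_bound E t (fun η => ?_) ω)
    rw [abs_of_nonneg (zz_nonneg x η)]; exact zz_le x η
  | succ k ih =>
    intro x ω h t ht
    have h1 := dynkin_le E (zz_cyl x) (zz_cyl (x + 1)) (gen_zz E x) ht ω
    have h2 : zz x ω = 0 := by
      have := h 0 (by omega)
      simp at this
      simp [zz, this]
    have h3 : ∫ s in (0:ℝ)..t, PE E s (zz (x + 1)) ω ≤ ∫ s in (0:ℝ)..t, s ^ k / (k.factorial : ℝ) :=
      intervalIntegral.integral_mono_on ht
        ((E.timeCont _ (cont _ (zz_cyl _)) ω).intervalIntegrable _ _)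
        ((by fun_prop : Continuous fun s : ℝ => s ^ k / (k.factorial : ℝ)).intervalIntegrable _ _)
        fun s hs => ih (x + 1) ω (fun i hi => by
          have := h (i + 1) (by omega)
          push_cast at this
          rwa [add_assoc, add_comm (1 : ℤ)]) s hs.1
    rw [pow_int] at h3
    linarith

/-- Indicator of a one at `x`. -/
def oo (x : ℤ) (ω : Config) : ℝ := if ω x = true then (1 : ℝ) else 0

lemma oo_cyl (x : ℤ) : IsCylinder (oo x) := cyl_ite _ _ _ _

lemma gen_oo (E : EastProcess) (x : ℤ) (ω : Config) : eastGen E.p (oo x) ω ≤ zz (x + 1) ω := by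
  have hd : DependsOnF (oo x) ↑({x} : Finset ℤ) := fun ω ω' h => by
    simp only [oo, h x (by simp)]
  rw [eastGen_sum E.p hd ω, Finset.sum_singleton]
  have h1 := cc_nonneg x ω
  have h2 := rr_nonneg E x ω
  have h3 := rr_le E x ω
  have h4 : oo x (flipAt ω x) - oo x ω ≤ 1 := by
    unfold oo; split_ifs <;> norm_num
  have h5 : cc x ω = zz (x + 1) ω := rfl
  rw [← h5]
  calc cc x ω * rr E.p x ω * (oo x (flipAt ω x) - oo x ω)
      ≤ cc x ω * rr E.p x ω * 1 := mul_le_mul_of_nonneg_left h4 (mul_nonneg h1 h2)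
    _ ≤ cc x ω := by rw [mul_one]; exact mul_le_of_le_one_right h1 h3

lemma obound (E : EastProcess) {ω : Config} (h : ω 0 = false) {t : ℝ} (ht : 0 ≤ t) :
    PE E t (oo 0) ω ≤ t := by
  have h1 := dynkin_le E (oo_cyl 0) (cyl_const 1) (fun ω => (gen_oo E 0 ω).trans (zz_le _ _)) ht ω
  have h2 : oo 0 ω = 0 := by simp [oo, h]
  simpa [h2, PE] using h1

lemma oobound (E : EastProcess) {ω : Config} (h : ω 0 = false) {t : ℝ} (ht : 0 ≤ t) :
    PE E t (fun η => oo 0 η * oo 1 η) ω ≤ t ^ 2 := by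
  have hd : DependsOnF (fun η => oo 0 η * oo 1 η) ↑({0, 1} : Finset ℤ) := fun ω ω' h => by
    simp only [oo, h 0 (by simp), h 1 (by simp)]
  have h1 := dynkin_le E ⟨_, hd⟩ (oo_cyl 0) (fun ω => ?_) ht ω
  · have h2 : oo 0 ω = 0 := by simp [oo, h]
    have h3 : ∫ s in (0:ℝ)..t, PE E s (oo 0) ω ≤ ∫ s in (0:ℝ)..t, s :=
      intervalIntegral.integral_mono_on ht
        ((E.timeCont _ (cont _ (oo_cyl _)) ω).intervalIntegrable _ _)
        (continuous_id.intervalIntegrable _ _) fun s hs => obound E h hs.1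
    simp only [integral_id, h2] at h1 h3
    nlinarith
  · rw [eastGen_sum E.p hd ω, Finset.sum_pair (by norm_num)]
    have h2 := rr_nonneg E 1 ω
    have h3 := rr_le E 1 ω
    have h4 := rr_nonneg E 0 ω
    cases h0 : ω 0 <;> cases h1 : ω 1 <;> cases h5 : ω 2 <;>
      simp [oo, cc, flipAt, h0, h1, h5] <;> linarith

lemma PE_real (E : EastProcess) (t : ℝ) (x : ℤ) (ω : Config) :
    PE E t (zz x) ω = (E.P t ω).real {η | η x = false} := by
  have hm : MeasurableSet {η : Config | η x = false} :=
    measurable_pi_apply x (MeasurableSet.singleton _)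
  rw [← integral_indicator_one hm]
  unfold PE
  refine integral_congr_ae (ae_of_all _ fun η => ?_)
  by_cases h : η x = false <;> simp [zz, Set.indicator, h]

end East

namespace East

/-! ### Stationarity seen from the front -/

lemma front_eq {η : Config} {y : ℤ} (h0 : η y = false) (h1 : ∀ x < y, η x = true) :
    front η = y := by
  refine IsLeast.csInf_eq ⟨h0, fun x hx => ?_⟩
  by_contra h
  have := h1 x (by omega)
  have hx : η x = false := hx
  simp [this] at hx

lemma LO_front {η : Config} (h : η ∈ LO) :
    η (front η) = false ∧ ∀ x < front η, η x = true := by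
  obtain ⟨⟨y, hy⟩, x, hx⟩ := h
  have hb : BddBelow {x : ℤ | η x = false} := ⟨y, fun z hz => by
    by_contra h
    have := hy z (by omega)
    have hz : η z = false := hz
    simp [this] at hz⟩
  refine ⟨Int.csInf_mem ⟨x, hx⟩ hb, fun z hz => ?_⟩
  by_contra h
  have : front η ≤ z := csInf_le hb (by simpa using h)
  omega

lemma LO₀_iff {η : Config} : η ∈ LO₀ ↔ η 0 = false ∧ ∀ x < 0, η x = true := by
  constructor
  · rintro ⟨h, h0⟩
    have := LO_front h
    rwa [h0] at this
  · rintro ⟨h0, h1⟩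
    exact ⟨⟨⟨0, h1⟩, 0, h0⟩, front_eq h0 h1⟩

lemma meas_site (x : ℤ) (b : Bool) : MeasurableSet {η : Config | η x = b} :=
  measurable_pi_apply x (MeasurableSet.singleton _)

lemma meas_LO₀ : MeasurableSet LO₀ := by
  have : LO₀ = {η : Config | η 0 = false} ∩ ⋂ x : ℤ, ⋂ _ : x < 0, {η | η x = true} := by
    ext η; rw [LO₀_iff]; simp
  rw [this]
  exact (meas_site _ _).inter (MeasurableSet.iInter fun x => MeasurableSet.iInter fun _ => meas_site _ _)

lemma meas_LO : MeasurableSet LO := by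
  have : LO = (⋃ y : ℤ, ⋂ x : ℤ, ⋂ _ : x < y, {η : Config | η x = true}) ∩
      ⋃ x : ℤ, {η | η x = false} := by
    ext η; simp [LO]
  rw [this]
  exact (MeasurableSet.iUnion fun y => MeasurableSet.iInter fun x => MeasurableSet.iInter
    fun _ => meas_site _ _).inter (MeasurableSet.iUnion fun x => meas_site _ _)

lemma LO₀_sub : LO₀ ⊆ LO := fun _ h => h.1

lemma ae_LO₀ {ν : Measure Config} [IsProbabilityMeasure ν] (h : ν LO₀ = 1) :
    ∀ᵐ ω ∂ν, ω ∈ LO₀ := (prob_compl_eq_zero_iff meas_LO₀).2 h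

lemma integral_bindP (E : EastProcess) (t : ℝ) (ν : Measure Config) [IsProbabilityMeasure ν]
    {f : Config → ℝ} (hf : Continuous f) :
    ∫ η, f η ∂(ν.bind (E.P t)) = ∫ ω, PE E t f ω ∂ν := by
  have h := Kernel.integral_comp (κ := Kernel.const Unit ν) (η := E.P t) (a := ()) (f := f)
    (int_cont hf _)
  rw [Kernel.comp_apply, Kernel.const_apply] at h
  exact h

instance (E : EastProcess) (t : ℝ) (ν : Measure Config) [IsProbabilityMeasure ν] :
    IsProbabilityMeasure (ν.bind (E.P t)) := by
  refine ⟨?_⟩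
  rw [Measure.bind_apply MeasurableSet.univ (Kernel.aemeasurable _)]
  simp

lemma bind_LO (E : EastProcess) {t : ℝ} (ht : 0 ≤ t) {ν : Measure Config} [IsProbabilityMeasure ν]
    (h : ν LO₀ = 1) : ∀ᵐ η ∂(ν.bind (E.P t)), η ∈ LO := by
  have h1 : ν.bind (E.P t) LO = 1 := by
    rw [Measure.bind_apply meas_LO (Kernel.aemeasurable _)]
    have : ∫⁻ ω, E.P t ω LO ∂ν = ∫⁻ _, 1 ∂ν := by
      refine lintegral_congr_ae ?_
      filter_upwards [ae_LO₀ h] with ω hω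
      exact E.loStable t ht ω (LO₀_sub hω)
    rw [this]; simp
  exact (prob_compl_eq_zero_iff meas_LO).2 h1

/-- Invariance of `ν` for the process seen from the front. -/
structure Inv (E : EastProcess) (ν : Measure Config) : Prop where
  prob : IsProbabilityMeasure ν
  lo : ν LO₀ = 1
  inv : ∀ t : ℝ, 0 ≤ t → Qt E t ν = ν

lemma Inv.aem {E : EastProcess} {ν : Measure Config} (I : Inv E ν) {t : ℝ} (ht : 0 ≤ t) :
    AEMeasurable (θL 0) (ν.bind (E.P t)) := by
  by_contra h
  have h1 := I.inv t ht
  unfold Qt at h1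
  rw [Measure.map_of_not_aemeasurable h] at h1
  have := I.lo
  rw [← h1] at this
  simp at this

/-- The configurations for which the local description of the front fails. -/
def bad : Set Config := {η | η 0 = true ∧ η 1 = true} ∪ ⋃ k : ℕ, {η | η (-(k + 2 : ℤ)) = false}

lemma meas_bad : MeasurableSet bad :=
  ((meas_site 0 true).inter (meas_site 1 true)).union (MeasurableSet.iUnion fun _ => meas_site _ _)

lemma bad_bound (E : EastProcess) {ω : Config} (hω : ω ∈ LO₀) {t : ℝ} (ht : 0 ≤ t) (ht1 : t ≤ 1) :
    E.P t ω bad ≤ ENNReal.ofReal (t ^ 2 * (1 + Real.exp 1)) := by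
  rw [LO₀_iff] at hω
  have hexp : HasSum (fun k : ℕ => (1 : ℝ) / (k.factorial : ℝ)) (Real.exp 1) := by
    have := NormedSpace.expSeries_div_hasSum_exp (𝔸 := ℝ) (1 : ℝ)
    simpa [Real.exp_eq_exp_ℝ] using this
  have h1 : E.P t ω {η | η 0 = true ∧ η 1 = true} ≤ ENNReal.ofReal (t ^ 2) := by
    rw [← ofReal_measureReal]
    refine ENNReal.ofReal_le_ofReal ?_
    have hm : MeasurableSet {η : Config | η 0 = true ∧ η 1 = true} :=
      (meas_site 0 true).inter (meas_site 1 true)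
    rw [← integral_indicator_one hm]
    refine le_of_eq_of_le ?_ (oobound E hω.1 ht)
    unfold PE
    refine integral_congr_ae (ae_of_all _ fun η => ?_)
    by_cases h : η 0 = true <;> by_cases h' : η 1 = true <;> simp [oo, Set.indicator, h, h']
  have h2 : ∀ k : ℕ, E.P t ω {η | η (-(k + 2 : ℤ)) = false}
      ≤ ENNReal.ofReal (t ^ 2 * (1 / (k.factorial : ℝ))) := by
    intro k
    rw [← ofReal_measureReal]
    refine ENNReal.ofReal_le_ofReal ?_
    rw [← PE_real]
    refine (zbound E (k + 2) _ ω (fun i hi => hω.2 _ (by omega)) t ht).trans ?_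
    rw [mul_one_div]
    have hf : (k.factorial : ℝ) ≤ ((k + 2).factorial : ℝ) := by
      exact_mod_cast Nat.factorial_le (by omega)
    have hk : (0 : ℝ) < k.factorial := by positivity
    refine div_le_div₀ (by positivity) ?_ hk hf
    exact pow_le_pow_of_le_one ht ht1 (by omega)
  refine (measure_union_le _ _).trans ?_
  rw [mul_add, mul_one, ENNReal.ofReal_add (by positivity) (by positivity)]
  refine add_le_add h1 ((measure_iUnion_le _).trans ((ENNReal.tsum_le_tsum h2).trans ?_))
  rw [← ENNReal.ofReal_tsum_of_nonneg (fun k => by positivity) (hexp.mul_left _).summable,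
    (hexp.mul_left _).tsum_eq]

/-- The local description of `u` seen from the front. -/
def Fu (u : Config → ℝ) (ω : Config) : ℝ :=
  if ω (-1) = false then u (shift (-1) ω) else
    if ω 0 = false then u ω else if ω 1 = false then u (shift 1 ω) else 0

lemma Fu_dep {u : Config → ℝ} {n : ℤ} (hn : 1 ≤ n) (hu : DependsOnF u ↑(Finset.Icc 1 n)) :
    DependsOnF (Fu u) ↑(Finset.Icc (-1) (n + 1)) := by
  intro ω ω' h
  unfold Fu
  rw [h (-1) (by simp; omega), h 0 (by simp; omega), h 1 (by simp; omega), hu ω ω' fun x hx => h x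
    (by simp at hx ⊢; omega),
    hu (shift (-1) ω) (shift (-1) ω') fun x hx => h _ (by simp at hx ⊢; omega),
    hu (shift 1 ω) (shift 1 ω') fun x hx => h _ (by simp at hx ⊢; omega)]

lemma Fu_good {u : Config → ℝ} {n : ℤ} (hu : DependsOnF u ↑(Finset.Icc 1 n)) {η : Config}
    (_hη : η ∈ LO) (hb : η ∉ bad) : u (θL 0 η) = Fu u η := by
  have hb1 : ¬(η 0 = true ∧ η 1 = true) := fun h => hb (Or.inl h)
  have hb2 : ∀ x : ℤ, x < -1 → η x = true := by
    intro x hx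
    by_contra h
    refine hb (Or.inr (Set.mem_iUnion.2 ⟨(-x - 2).toNat, ?_⟩))
    have : -(((-x - 2).toNat : ℤ) + 2) = x := by omega
    show η _ = false
    rw [this]; simpa using h
  have key : ∀ y : ℤ, front η = y → u (θL 0 η) = u (shift y η) := by
    intro y hy
    refine hu _ _ fun x hx => ?_
    simp at hx
    unfold θL shift
    rw [if_neg (by omega), if_neg (by omega), hy]; congr 1; ring
  unfold Fu
  by_cases h1 : η (-1) = false
  · rw [if_pos h1]
    exact key _ (front_eq h1 hb2)
  rw [if_neg h1]
  have h1 : η (-1) = true := by simpa using h1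
  have hb3 : ∀ x : ℤ, x < 0 → η x = true := by
    intro x hx
    rcases eq_or_ne x (-1) with h | h
    · rw [h, h1]
    · exact hb2 x (by omega)
  by_cases h2 : η 0 = false
  · rw [if_pos h2, key _ (front_eq h2 hb3)]
    congr 1; funext x; simp [shift]
  rw [if_neg h2]
  have h2 : η 0 = true := by simpa using h2
  have h3 : η 1 = false := by simpa [h2] using hb1
  rw [if_pos h3]
  refine key _ (front_eq h3 fun x hx => ?_)
  rcases eq_or_ne x 0 with h | h
  · rw [h, h2]
  · exact hb3 x (by omega)

lemma Fu_LO₀ (u : Config → ℝ) {ω : Config} (hω : ω ∈ LO₀) : Fu u ω = u ω := by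
  rw [LO₀_iff] at hω
  simp [Fu, hω.1, hω.2 (-1) (by norm_num)]

lemma Fu_diff {E : EastProcess} {ν : Measure Config} (I : Inv E ν) {u : Config → ℝ} {n : ℤ}
    (hn : 1 ≤ n) (hu : DependsOnF u ↑(Finset.Icc 1 n)) :
    ∃ C, ∀ t, 0 < t → t ≤ 1 → |∫ ω, (PE E t (Fu u) ω - Fu u ω) / t ∂ν| ≤ C * t := by
  have := I.prob
  have huc : IsCylinder u := ⟨_, hu⟩
  have hFc : IsCylinder (Fu u) := ⟨_, Fu_dep hn hu⟩
  obtain ⟨b, hb0, hb⟩ := bdd huc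
  obtain ⟨b', hb0', hb'⟩ := bdd hFc
  refine ⟨(b + b') * (1 + Real.exp 1), fun t ht ht1 => ?_⟩
  have haem := I.aem ht.le
  have hinv : Measure.map (θL 0) (ν.bind (E.P t)) = ν := I.inv t ht.le
  have e1 : ∫ ω, Fu u ω ∂ν = ∫ η, u (θL 0 η) ∂(ν.bind (E.P t)) := by
    rw [← integral_map haem (meas huc).aestronglyMeasurable, hinv]
    refine integral_congr_ae ?_
    filter_upwards [ae_LO₀ I.lo] with ω hω using Fu_LO₀ u hω
  have e2 : ∫ ω, PE E t (Fu u) ω ∂ν = ∫ η, Fu u η ∂(ν.bind (E.P t)) :=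
    (integral_bindP E t ν (cont _ hFc)).symm
  have i1 : Integrable (fun η => u (θL 0 η)) (ν.bind (E.P t)) :=
    Integrable.of_bound ((meas huc).comp_aemeasurable haem).aestronglyMeasurable b
      (ae_of_all _ fun η => hb _)
  have i2 : Integrable (Fu u) (ν.bind (E.P t)) := integ hFc _
  have i3 : Integrable (PE E t (Fu u)) ν :=
    int_cont (E.feller t ht.le _ (cont _ hFc)) _
  have hbd : (ν.bind (E.P t)).real bad ≤ t ^ 2 * (1 + Real.exp 1) := by
    refine ENNReal.toReal_le_of_le_ofReal (by positivity) ?_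
    rw [Measure.bind_apply meas_bad (Kernel.aemeasurable _)]
    calc ∫⁻ ω, E.P t ω bad ∂ν ≤ ∫⁻ _, ENNReal.ofReal (t ^ 2 * (1 + Real.exp 1)) ∂ν := by
          refine lintegral_mono_ae ?_
          filter_upwards [ae_LO₀ I.lo] with ω hω using bad_bound E hω ht.le ht1
      _ = _ := by simp
  rw [integral_div, abs_div, abs_of_pos ht, div_le_iff₀ ht, integral_sub i3 (integ hFc _), e1, e2,
    ← integral_sub i2 i1]
  calc |∫ η, (Fu u η - u (θL 0 η)) ∂(ν.bind (E.P t))|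
      ≤ ∫ η, |Fu u η - u (θL 0 η)| ∂(ν.bind (E.P t)) := abs_integral_le_integral_abs
    _ ≤ ∫ η, bad.indicator (fun _ => b + b') η ∂(ν.bind (E.P t)) := by
        refine integral_mono_ae (i2.sub i1).abs ((integrable_const _).indicator meas_bad) ?_
        filter_upwards [bind_LO E ht.le I.lo] with η hη
        by_cases hbad : η ∈ bad
        · rw [Set.indicator_of_mem hbad]
          have h1 := abs_le.1 (hb (θL 0 η))
          have h2 := abs_le.1 (hb' η)
          exact abs_le.2 ⟨by linarith [h1.1, h1.2, h2.1, h2.2], by linarith [h1.1, h1.2, h2.1, h2.2]⟩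
        · rw [Set.indicator_of_notMem hbad, Fu_good hu hη hbad]; simp
    _ = (ν.bind (E.P t)).real bad * (b + b') := by
        rw [integral_indicator_const _ meas_bad]; simp
    _ ≤ (t ^ 2 * (1 + Real.exp 1)) * (b + b') :=
        mul_le_mul_of_nonneg_right hbd (by positivity)
    _ = _ := by ring

lemma factA0 {E : EastProcess} {ν : Measure Config} (I : Inv E ν) {u : Config → ℝ} {n : ℤ}
    (hn : 1 ≤ n) (hu : DependsOnF u ↑(Finset.Icc 1 n)) : ∫ ω, eastGen E.p (Fu u) ω ∂ν = 0 := by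
  have := I.prob
  obtain ⟨C, hC⟩ := Fu_diff I hn hu
  have h1 := gen_int E ⟨_, Fu_dep hn hu⟩ ν
  refine tendsto_nhds_unique h1 ?_
  have h2 : Tendsto (fun t : ℝ => C * t) (𝓝[>] 0) (𝓝 0) := by
    have : Tendsto (fun t : ℝ => C * t) (𝓝 0) (𝓝 (C * 0)) := by
      exact (continuous_const.mul continuous_id).tendsto 0
    rw [mul_zero] at this
    exact this.mono_left nhdsWithin_le_nhds
  refine squeeze_zero_norm' ?_ h2
  filter_upwards [Ioo_mem_nhdsGT (show (0:ℝ) < 1 by norm_num)] with t ht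
  exact hC t ht.1 ht.2.le

/-- Stationarity identity for local functions behind the front. -/
lemma factA {E : EastProcess} {ν : Measure Config} (I : Inv E ν) {u : Config → ℝ} {n : ℤ}
    (hn : 1 ≤ n) (hu : DependsOnF u ↑(Finset.Icc 1 n)) :
    ∑ x ∈ Finset.Icc 1 n, ∫ ω, cc x ω * rr E.p x ω * (u (flipAt ω x) - u ω) ∂ν
      + ∫ ω, (1 - E.p) * (u (shift (-1) ω) - u ω) ∂ν
      + ∫ ω, cc 0 ω * E.p * (u (shift 1 ω) - u ω) ∂ν = 0 := by
  have := I.prob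
  have huc : IsCylinder u := ⟨_, hu⟩
  have c1 : ∀ x, IsCylinder (fun ω => cc x ω * rr E.p x ω * (u (flipAt ω x) - u ω)) := fun x =>
    cyl_mul (cyl_mul (cc_cyl x) (rr_cyl _ x)) (cyl_sub (cyl_flip huc x) huc)
  have c2 : IsCylinder (fun ω => (1 - E.p) * (u (shift (-1) ω) - u ω)) :=
    cyl_mul (cyl_const _) (cyl_sub (cyl_shift huc _) huc)
  have c3 : IsCylinder (fun ω => cc 0 ω * E.p * (u (shift 1 ω) - u ω)) :=
    cyl_mul (cyl_mul (cc_cyl _) (cyl_const _)) (cyl_sub (cyl_shift huc _) huc)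
  rw [← integral_finsetSum _ fun x _ => integ (c1 x) ν,
    ← integral_add (integ (cyl_sum _ fun x _ => c1 x) ν) (integ c2 ν),
    ← integral_add (integ (cyl_add (cyl_sum _ fun x _ => c1 x) c2) ν) (integ c3 ν),
    ← factA0 I hn hu]
  refine integral_congr_ae ?_
  filter_upwards [ae_LO₀ I.lo] with ω hω
  have hω' := hω
  rw [LO₀_iff] at hω'
  obtain ⟨hω0, hω1⟩ := hω'
  have hm1 : ω (-1) = true := hω1 _ (by norm_num)
  rw [eastGen_sum E.p (Fu_dep hn hu) ω]
  have hS : Finset.Icc (-1) (n + 1) = insert (-1) (insert 0 (insert (n + 1) (Finset.Icc 1 n))) := by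
    ext x; simp; omega
  rw [hS, Finset.sum_insert (by simp; omega), Finset.sum_insert (by simp; omega),
    Finset.sum_insert (by simp), Fu_LO₀ u hω]
  have t1 : Fu u (flipAt ω (-1)) = u (shift (-1) ω) := by
    unfold Fu
    rw [if_pos (by simp [flipAt, hm1])]
    refine hu _ _ fun x hx => ?_
    simp at hx
    simp [shift, flipAt]
    omega
  have t2 : cc 0 ω * rr E.p 0 ω * (Fu u (flipAt ω 0) - u ω)
      = cc 0 ω * E.p * (u (shift 1 ω) - u ω) := by
    unfold cc
    by_cases h1 : ω (0 + 1) = false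
    · have h1' : ω 1 = false := by simpa using h1
      have : Fu u (flipAt ω 0) = u (shift 1 ω) := by
        unfold Fu
        rw [if_neg (by simp [flipAt, hm1]), if_neg (by simp [flipAt, hω0]),
          if_pos (by simp [flipAt, h1'])]
        refine hu _ _ fun x hx => ?_
        simp at hx
        simp [shift, flipAt]
        omega
      rw [this]; simp [rr, hω0]
    · rw [if_neg h1]; simp
  have t3 : ∀ x, 1 ≤ x → Fu u (flipAt ω x) = u (flipAt ω x) := by
    intro x hx
    unfold Fu
    rw [if_neg, if_pos]
    · simp [flipAt, hω0]; omega
    · simp [flipAt, hm1]; omega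
  rw [t1, t2, t3 (n + 1) (by omega), dep_flip hu (x := n + 1) (by simp)]
  have t4 : ∑ x ∈ Finset.Icc 1 n, cc x ω * rr E.p x ω * (Fu u (flipAt ω x) - u ω)
      = ∑ x ∈ Finset.Icc 1 n, cc x ω * rr E.p x ω * (u (flipAt ω x) - u ω) :=
    Finset.sum_congr rfl fun x hx => by rw [t3 x (Finset.mem_Icc.1 hx).1]
  rw [t4]
  have : cc (-1) ω = 1 := by simp [cc, hω0]
  rw [this]
  have : rr E.p (-1) ω = 1 - E.p := by simp [rr, hm1]
  rw [this]
  ring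

end East

namespace East

/-! ### Infinitely many zeros -/

/-- Configurations with a last zero at `M`. -/
def Fn (M : ℤ) : Set Config := {ω | ω M = false ∧ ∀ i, M < i → ω i = true}

lemma meas_Fn (M : ℤ) : MeasurableSet (Fn M) := by
  have : Fn M = {η : Config | η M = false} ∩ ⋂ x : ℤ, ⋂ _ : M < x, {η | η x = true} := by
    ext η; simp [Fn]
  rw [this]
  exact (meas_site _ _).inter (MeasurableSet.iInter fun x => MeasurableSet.iInter fun _ => meas_site _ _)

lemma Fn_disj : Pairwise (Function.onFun Disjoint Fn) := by
  intro a b hab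
  refine Set.disjoint_left.2 fun ω ha hb => ?_
  rcases lt_or_gt_of_ne hab with h | h
  · have := ha.2 b h; rw [hb.1] at this; simp at this
  · have := hb.2 a h; rw [ha.1] at this; simp at this

lemma zz_zero (E : EastProcess) {ω : Config} {x : ℤ} (h : ∀ i, x ≤ i → ω i = true) {t : ℝ}
    (ht : 0 ≤ t) : PE E t (zz x) ω = 0 := by
  refine le_antisymm ?_ (integral_nonneg fun η => zz_nonneg x η)
  exact ge_of_tendsto (FloorSemiring.tendsto_pow_div_factorial_atTop t)
    (Eventually.of_forall fun k => zbound E k x ω (fun i _ => h _ (by omega)) t ht)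

lemma real_zero {m : Measure Config} [IsFiniteMeasure m] {s : Set Config} (h : m.real s = 0) :
    m s = 0 := (measureReal_eq_zero_iff).1 h

lemma Fn_stable (E : EastProcess) {M : ℤ} {ω : Config} (hω : ω ∈ Fn M) {t : ℝ} (ht : 0 ≤ t) :
    ∀ᵐ η ∂(E.P t ω), η ∈ Fn M := by
  have h1 : ∀ x, ∀ᵐ η ∂(E.P t ω), M < x → η x = true := by
    intro x
    by_cases hx : M < x
    · have h := zz_zero E (x := x) (fun i hi => hω.2 i (by omega)) ht
      rw [PE_real] at h
      have h := real_zero h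
      rw [← compl_compl {η : Config | η x = false}] at h
      filter_upwards [mem_ae_iff.2 h] with η hη _
      simpa using hη
    · exact ae_of_all _ fun η h => absurd h hx
  have h2 : ∀ᵐ η ∂(E.P t ω), η M = false := by
    have h := dynkin_le E (oo_cyl M) (zz_cyl (M + 1)) (gen_oo E M) ht ω
    have h0 : oo M ω = 0 := by simp [oo, hω.1]
    have hz : ∫ s in (0:ℝ)..t, PE E s (zz (M + 1)) ω = 0 := by
      rw [intervalIntegral.integral_congr (g := fun _ => (0:ℝ))]
      · simp
      · intro s hs
        rw [Set.uIcc_of_le ht] at hs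
        exact zz_zero E (fun i hi => hω.2 i (by omega)) hs.1
    rw [h0, hz, zero_add] at h
    have h' : ∫ η, oo M η ∂(E.P t ω) = 0 := le_antisymm h (integral_nonneg fun η => by
      simp only [oo, Pi.zero_apply]; split_ifs <;> norm_num)
    rw [integral_eq_zero_iff_of_nonneg (fun η => by
      simp only [oo, Pi.zero_apply]; split_ifs <;> norm_num) (integ (oo_cyl M) _)] at h'
    filter_upwards [h'] with η hη
    simp [oo] at hη
    simpa using hη
  filter_upwards [ae_all_iff.2 h1, h2] with η h3 h4
  exact ⟨h4, h3⟩

/-- The law of the configuration seen from its last zero. -/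
def lastLaw (ν : Measure Config) : Measure Config :=
  Measure.sum fun M : ℤ => Measure.map (shift M) (ν.restrict (Fn M))

/-- Shift-invariant saturation. -/
def SA (A : Set Config) : Set Config := ⋃ M : ℤ, Fn M ∩ shift M ⁻¹' A

lemma meas_SA {A : Set Config} (hA : MeasurableSet A) : MeasurableSet (SA A) :=
  MeasurableSet.iUnion fun M => (meas_Fn M).inter (meas_shift M hA)

lemma lastLaw_apply (ν : Measure Config) {A : Set Config} (hA : MeasurableSet A) :
    lastLaw ν A = ν (SA A) := by
  unfold lastLaw SA
  rw [Measure.sum_apply _ hA, measure_iUnion]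
  · congr 1; funext M
    rw [Measure.map_apply (meas_shift M) hA, Measure.restrict_apply (meas_shift M hA),
      Set.inter_comm]
  · intro a b hab
    exact (Fn_disj hab).mono Set.inter_subset_left Set.inter_subset_left
  · exact fun M => (meas_Fn M).inter (meas_shift M hA)

instance (ν : Measure Config) [IsProbabilityMeasure ν] : IsFiniteMeasure (lastLaw ν) :=
  ⟨by rw [lastLaw_apply _ MeasurableSet.univ]; exact measure_lt_top _ _⟩

lemma shift_shift (a b : ℤ) (ω : Config) : shift a (shift b ω) = shift (a + b) ω := by
  funext x; simp only [shift]; congr 1; ring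

lemma shift_Fn {y M : ℤ} {ω : Config} : shift y ω ∈ Fn M ↔ ω ∈ Fn (M + y) := by
  simp only [Fn, shift, Set.mem_ofPred_eq]
  refine and_congr_right fun _ => ⟨fun h i hi => ?_, fun h i hi => h _ (by omega)⟩
  have := h (i - y) (by omega)
  simpa using this

lemma shift_SA {A : Set Config} {y : ℤ} {ω : Config} : shift y ω ∈ SA A ↔ ω ∈ SA A := by
  simp only [SA, Set.mem_iUnion, Set.mem_inter_iff, Set.mem_preimage, shift_Fn, shift_shift]
  constructor
  · rintro ⟨M, h⟩; exact ⟨M + y, h⟩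
  · rintro ⟨M, h⟩; exact ⟨M - y, by simpa using h⟩

lemma θ_shift {η : Config} (h : η ∈ LO) : θL 0 η = shift (front η) η := by
  obtain ⟨h0, h1⟩ := LO_front h
  funext x
  unfold θL shift
  split_ifs with hx hx'
  · exact (h1 _ (by omega)).symm
  · rw [hx', zero_add, h0]
  · congr 1; ring

lemma lastLaw_le {E : EastProcess} {ν : Measure Config} (I : Inv E ν) {t : ℝ} (ht : 0 ≤ t)
    {A : Set Config} (hA : MeasurableSet A) : (lastLaw ν).bind (E.P t) A ≤ lastLaw ν A := by
  have := I.prob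
  have hmP : ∀ B : Set Config, MeasurableSet B → Measurable (fun ω => E.P t ω B) := fun B hB =>
    (E.P t).measurable_coe hB
  rw [Measure.bind_apply hA (Kernel.aemeasurable _)]
  calc ∫⁻ ω, E.P t ω A ∂(lastLaw ν)
      = ∑' M : ℤ, ∫⁻ ω in Fn M, E.P t (shift M ω) A ∂ν := by
        unfold lastLaw
        rw [lintegral_sum_measure]
        congr 1; funext M
        rw [lintegral_map (hmP A hA) (meas_shift M)]
    _ ≤ ∑' M : ℤ, ∫⁻ ω in Fn M, E.P t ω (SA A) ∂ν := by
        refine ENNReal.tsum_le_tsum fun M => setLIntegral_mono' (meas_Fn M) fun ω hω => ?_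
        rw [E.shiftComm t ht M ω, Measure.map_apply (meas_shift M) hA]
        refine measure_mono_ae ?_
        filter_upwards [Fn_stable E hω ht] with η hη hηA
        exact Set.mem_iUnion.2 ⟨M, hη, hηA⟩
    _ = ∫⁻ ω in ⋃ M, Fn M, E.P t ω (SA A) ∂ν := by
        rw [lintegral_iUnion meas_Fn Fn_disj]
    _ ≤ ∫⁻ ω, E.P t ω (SA A) ∂ν := setLIntegral_le_lintegral _ _
    _ = ν.bind (E.P t) (SA A) := by
        rw [Measure.bind_apply (meas_SA hA) (Kernel.aemeasurable _)]
    _ ≤ ν.bind (E.P t) (θL 0 ⁻¹' SA A) := by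
        refine measure_mono_ae ?_
        filter_upwards [bind_LO E ht I.lo] with η hη hηA
        show θL 0 η ∈ SA A
        rw [θ_shift hη]
        exact shift_SA.2 hηA
    _ = Measure.map (θL 0) (ν.bind (E.P t)) (SA A) := by
        rw [Measure.map_apply_of_aemeasurable (I.aem ht) (meas_SA hA)]
    _ = ν (SA A) := by
        have h := I.inv t ht
        unfold Qt at h
        exact congrArg (fun m : Measure Config => m (SA A)) h
    _ = lastLaw ν A := (lastLaw_apply ν hA).symm

lemma lastLaw_inv {E : EastProcess} {ν : Measure Config} (I : Inv E ν) {t : ℝ} (ht : 0 ≤ t) :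
    (lastLaw ν).bind (E.P t) = lastLaw ν := by
  have := I.prob
  have hu : (lastLaw ν).bind (E.P t) Set.univ = lastLaw ν Set.univ := by
    rw [Measure.bind_apply MeasurableSet.univ (Kernel.aemeasurable _)]
    simp
  have hf : IsFiniteMeasure ((lastLaw ν).bind (E.P t)) := ⟨by rw [hu]; exact measure_lt_top _ _⟩
  exact Measure.eq_of_le_of_measure_univ_eq (Measure.le_iff.2 fun A hA => lastLaw_le I ht hA) hu

lemma integral_bindP' (E : EastProcess) (t : ℝ) (ν : Measure Config) [IsFiniteMeasure ν]
    {f : Config → ℝ} (hf : Continuous f) :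
    ∫ η, f η ∂(ν.bind (E.P t)) = ∫ ω, PE E t f ω ∂ν := by
  have h := Kernel.integral_comp (κ := Kernel.const Unit ν) (η := E.P t) (a := ()) (f := f)
    (int_cont hf _)
  rw [Kernel.comp_apply, Kernel.const_apply] at h
  exact h

lemma lastLaw_gen {E : EastProcess} {ν : Measure Config} (I : Inv E ν) {v : Config → ℝ}
    (hv : IsCylinder v) : ∫ ω, eastGen E.p v ω ∂(lastLaw ν) = 0 := by
  have := I.prob
  refine tendsto_nhds_unique (gen_int E hv (lastLaw ν)) ?_
  refine (tendsto_const_nhds (x := (0:ℝ))).congr' ?_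
  refine eventually_nhdsWithin_of_forall fun t ht => ?_
  have ht : 0 < t := ht
  show (0:ℝ) = ∫ ω, (PE E t v ω - v ω) / t ∂lastLaw ν
  have hi : Integrable (PE E t v) (lastLaw ν) := int_cont (E.feller t ht.le _ (cont _ hv)) _
  rw [integral_div, integral_sub hi (integ hv _),
    ← integral_bindP' E t _ (cont _ hv), lastLaw_inv I ht.le]
  simp

lemma ae_lastLaw {ν : Measure Config} [IsProbabilityMeasure ν] (h : ν LO₀ = 1) :
    ∀ᵐ ω ∂(lastLaw ν), ω 0 = false ∧ ω ∈ LO := by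
  unfold lastLaw
  have hms : MeasurableSet {ω : Config | ω 0 = false ∧ ω ∈ LO} := (meas_site 0 false).inter meas_LO
  refine (Measure.ae_sum_iff' hms).2 fun M => ?_
  rw [ae_map_iff (meas_shift M).aemeasurable hms,
    ae_restrict_iff' (meas_Fn M)]
  filter_upwards [ae_LO₀ h] with ω hω hM
  refine ⟨by simpa [shift] using hM.1, ⟨-M, fun x hx => ?_⟩, 0, by simpa [shift] using hM.1⟩
  exact (LO₀_iff.1 hω).2 _ (by omega)

lemma lastLaw_bern {E : EastProcess} (hgap : 0 < gap E) {ν : Measure Config} (I : Inv E ν)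
    {n : ℤ} (hn : 1 ≤ n) :
    ∫ ω, oo (-n) ω ∂(lastLaw ν) = (lastLaw ν).real Set.univ * E.p := by
  have := I.prob
  set π := lastLaw ν with hπ
  set W : Finset ℤ := Finset.Icc (-n) (-1) with hW
  set h := dens W π E.μ with hh
  have hd : DependsOnF h ↑W := dens_dep W π E.μ
  have hc : IsCylinder h := ⟨_, hd⟩
  set w : ℤ → Config → ℝ := fun x ω => if x = -1 then 1 else cc x ω with hw
  have hwc : ∀ x, IsCylinder (w x) := by
    intro x
    by_cases hx : x = -1
    · simp only [hw, hx, if_true]; exact cyl_const 1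
    · simp only [hw, hx, if_false]; exact cc_cyl x
  have hwcc : ∀ x ω, cc x ω ≤ w x ω := by
    intro x ω
    by_cases hx : x = -1
    · simp only [hw, hx, if_true]; exact cc_le _ _
    · simp only [hw, hx, if_false]; exact le_rfl
  have hgen := lastLaw_gen I hc
  have hnab : ∀ x, IsCylinder (fun ω => w x ω * rr E.p x ω * (h (flipAt ω x) - h ω)) := fun x =>
    cyl_mul (cyl_mul (hwc x) (rr_cyl _ x)) (cyl_sub (cyl_flip hc x) hc)
  have hdep : ∀ x ∈ W, DependsOnF (fun ω => w x ω * rr E.p x ω * (h (flipAt ω x) - h ω)) ↑W := by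
    intro x hx ω ω' hωω
    have e1 : w x ω = w x ω' := by
      by_cases hx1 : x = -1
      · simp only [hw, hx1, if_true]
      · simp only [hw, hx1, if_false, cc]
        rw [hωω (x + 1) (by simp [hW] at hx ⊢; omega)]
    have e2 : h (flipAt ω x) = h (flipAt ω' x) := hd _ _ fun y hy => by
      simp only [flipAt, hωω y hy, hωω x hx]
    simp only [e1, e2, hd ω ω' hωω, rr, hωω x hx]
  have e1 : ∫ ω, eastGen E.p h ω ∂π
      = ∑ x ∈ W, ∫ ω, w x ω * rr E.p x ω * (h (flipAt ω x) - h ω) ∂π := by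
    rw [← integral_finsetSum _ fun x _ => integ (hnab x) π]
    refine integral_congr_ae ?_
    filter_upwards [ae_lastLaw I.lo] with ω hω
    rw [eastGen_sum E.p hd ω]
    refine Finset.sum_congr rfl fun x hx => ?_
    congr 2
    by_cases hx1 : x = -1
    · subst hx1; simp [hw, cc, hω.1]
    · simp only [hw, hx1, if_false]
  have e2 : ∀ x ∈ W, ∫ ω, w x ω * rr E.p x ω * (h (flipAt ω x) - h ω) ∂π
      = -(1/2) * ∫ ω, w x ω * rr E.p x ω * ((h (flipAt ω x) - h ω) * (h (flipAt ω x) - h ω)) ∂E.μ := by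
    intro x hx
    rw [integral_dens (hdep x hx) π E.μ fun σ => μ_cyl_pos E W σ]
    refine byparts E x (hwc x) hc hc fun ω => ?_
    by_cases hx1 : x = -1
    · simp only [hw, hx1, if_true]
    · simp only [hw, hx1, if_false]
      exact cc_flip (by omega) ω
  rw [e1, Finset.sum_congr rfl e2, ← Finset.mul_sum] at hgen
  have hgb := gap_bound E hd
  have hle : ∑ x ∈ W, ∫ ω, cc x ω * rr E.p x ω * (h (flipAt ω x) - h ω) ^ 2 ∂E.μ ≤
      ∑ x ∈ W, ∫ ω, w x ω * rr E.p x ω * ((h (flipAt ω x) - h ω) * (h (flipAt ω x) - h ω)) ∂E.μ := by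
    refine Finset.sum_le_sum fun x _ => integral_mono (integ ?_ _) (integ ?_ _) fun ω => ?_
    · exact cyl_mul (cyl_mul (cc_cyl x) (rr_cyl _ x)) (cyl_pow (cyl_sub (cyl_flip hc x) hc) 2)
    · exact cyl_mul (cyl_mul (hwc x) (rr_cyl _ x))
        (cyl_mul (cyl_sub (cyl_flip hc x) hc) (cyl_sub (cyl_flip hc x) hc))
    · simp only
      rw [← pow_two]
      exact mul_le_mul_of_nonneg_right
        (mul_le_mul_of_nonneg_right (hwcc x ω) (rr_nonneg E x ω)) (sq_nonneg _)
  have hvar : variance h E.μ ≤ 0 := by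
    have : gap E * variance h E.μ ≤ 0 := by linarith
    by_contra hcon
    push Not at hcon
    nlinarith [mul_pos hgap hcon]
  rw [variance_eq_integral (meas hc).aemeasurable] at hvar
  set c := ∫ ω, h ω ∂E.μ with hcdef
  have hae : ∀ᵐ ω ∂E.μ, h ω = c := by
    have hnn : 0 ≤ ∫ ω, (h ω - c) ^ 2 ∂E.μ := integral_nonneg fun ω => sq_nonneg _
    have h0 := le_antisymm hvar hnn
    rw [integral_eq_zero_iff_of_nonneg (fun ω => sq_nonneg _)
      (integ (cyl_pow (cyl_sub hc (cyl_const c)) 2) _)] at h0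
    filter_upwards [h0] with ω hω
    have : (h ω - c) ^ 2 = 0 := hω
    nlinarith [pow_eq_zero_iff (two_ne_zero) |>.1 this]
  have hmass : c = π.real Set.univ := by
    have := integral_dens (W := W) (φ := fun _ => (1:ℝ)) (fun _ _ _ => rfl) π E.μ
      fun σ => μ_cyl_pos E W σ
    simp only [mul_one] at this
    rw [hcdef, hh, ← this]; simp
  have hdo : DependsOnF (oo (-n)) ↑W := fun ω ω' hω => by
    simp only [oo, hω (-n) (by simp [hW]; omega)]
  rw [integral_dens hdo π E.μ fun σ => μ_cyl_pos E W σ]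
  have : ∫ ω, dens W π E.μ ω * oo (-n) ω ∂E.μ = ∫ ω, c * oo (-n) ω ∂E.μ :=
    integral_congr_ae (by filter_upwards [hae] with ω hω; rw [← hω])
  rw [this, integral_const_mul, hmass]
  congr 1
  have := integral_site E (-n) (fun b => if b = true then (1:ℝ) else 0)
  simpa [oo] using this

lemma lastLaw_zero {E : EastProcess} (hgap : 0 < gap E) {ν : Measure Config} (I : Inv E ν) :
    lastLaw ν = 0 := by
  have := I.prob
  have h1 : Tendsto (fun n : ℕ => ∫ ω, oo (-(n + 1 : ℤ)) ω ∂(lastLaw ν)) atTop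
      (𝓝 (∫ _, (1:ℝ) ∂(lastLaw ν))) := by
    refine tendsto_integral_of_dominated_convergence (fun _ => 1)
      (fun n => (meas (oo_cyl _)).aestronglyMeasurable) (integrable_const _) ?_ ?_
    · refine fun n => ae_of_all _ fun ω => ?_
      simp only [oo]; split_ifs <;> simp
    · filter_upwards [ae_lastLaw I.lo] with ω hω
      obtain ⟨y, hy⟩ := hω.2.1
      refine tendsto_const_nhds.congr' ?_
      filter_upwards [eventually_ge_atTop (-y).toNat] with n hn
      have := hy (-(n + 1 : ℤ)) (by omega)
      simp only [oo]; rw [if_pos this]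
  have h2 : (fun n : ℕ => ∫ ω, oo (-(n + 1 : ℤ)) ω ∂(lastLaw ν))
      = fun _ => (lastLaw ν).real Set.univ * E.p := by
    funext n; exact lastLaw_bern hgap I (by omega)
  rw [h2] at h1
  have h3 := tendsto_nhds_unique tendsto_const_nhds h1
  simp only [integral_const, smul_eq_mul, mul_one] at h3
  have hp := E.hp1
  have h4 : (lastLaw ν).real Set.univ = 0 := by nlinarith
  exact Measure.measure_univ_eq_zero.1 (real_zero h4)

lemma no_last {E : EastProcess} (hgap : 0 < gap E) {ν : Measure Config} (I : Inv E ν) (M : ℤ) :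
    ν (Fn M) = 0 := by
  have h : lastLaw ν Set.univ = 0 := by rw [lastLaw_zero hgap I]; simp
  rw [lastLaw_apply ν MeasurableSet.univ] at h
  refine measure_mono_null ?_ h
  intro ω hω
  exact Set.mem_iUnion.2 ⟨M, hω, trivial⟩

/-- No zero in `[M, n]`. -/
def noz (M n : ℤ) : Set Config := {ω | ∀ i, M ≤ i → i ≤ n → ω i = true}

lemma meas_noz (M n : ℤ) : MeasurableSet (noz M n) := by
  have : noz M n = ⋂ i : ℤ, ⋂ _ : M ≤ i, ⋂ _ : i ≤ n, {η : Config | η i = true} := by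
    ext; simp [noz]
  rw [this]
  exact MeasurableSet.iInter fun i => MeasurableSet.iInter fun _ => MeasurableSet.iInter
    fun _ => meas_site _ _

lemma factB {E : EastProcess} (hgap : 0 < gap E) {ν : Measure Config} (I : Inv E ν) (M : ℤ) :
    Tendsto (fun n : ℕ => ν.real (noz M n)) atTop (𝓝 0) := by
  have := I.prob
  have h0 : ν (⋂ n : ℕ, noz M n) = 0 := by
    have hsub : (⋂ n : ℕ, noz M n) ≤ᵐ[ν] ⋃ k : ℤ, Fn k := by
      filter_upwards [ae_LO₀ I.lo] with ω hω hωn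
      have hω0 := (LO₀_iff.1 hω).1
      have hall : ∀ i, M ≤ i → ω i = true := by
        intro i hi
        have := Set.mem_iInter.1 hωn i.toNat
        exact this i hi (by omega)
      have hex : ∃ k, ω k = false ∧ ∀ z, ω z = false → z ≤ k :=
        Int.exists_greatest_of_bdd ⟨M, fun z hz => by
          by_contra hcon
          rw [hall z (by omega)] at hz; simp at hz⟩ ⟨0, hω0⟩
      obtain ⟨k, hk, hk'⟩ := hex
      refine Set.mem_iUnion.2 ⟨k, hk, fun i hi => ?_⟩
      by_contra hcon
      have := hk' i (by simpa using hcon)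
      omega
    refine le_antisymm ((measure_mono_ae hsub).trans ?_) zero_le
    rw [measure_iUnion_null fun k => no_last hgap I k]
  have h1 := tendsto_measure_iInter_atTop (μ := ν) (s := fun n : ℕ => noz M n)
    (fun n => (meas_noz M n).nullMeasurableSet)
    (fun a b hab ω hω i h1 h2 => hω i h1 (by have : (a:ℤ) ≤ b := by exact_mod_cast hab
                                             omega))
    ⟨0, measure_ne_top _ _⟩
  rw [h0] at h1
  have := (ENNReal.tendsto_toReal (by simp : (0 : ENNReal) ≠ ⊤)).comp h1
  simpa [Measure.real, Function.comp_def] using this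

end East

namespace East

/-! ### Entropy bound -/

/-- Local density of `ν` on `[1,n]`. -/
def gd (E : EastProcess) (ν : Measure Config) (n : ℤ) : Config → ℝ :=
  dens (Finset.Icc 1 n) ν E.μ

/-- Regularised local density. -/
def Fd (E : EastProcess) (ν : Measure Config) (n : ℤ) (ω : Config) : ℝ := gd E ν n ω + 1

lemma gd_nonneg (E : EastProcess) (ν : Measure Config) (n : ℤ) (ω : Config) : 0 ≤ gd E ν n ω :=
  dens_nonneg _ _ _ _

lemma Fd_ge (E : EastProcess) (ν : Measure Config) (n : ℤ) (ω : Config) : 1 ≤ Fd E ν n ω := by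
  have := gd_nonneg E ν n ω
  unfold Fd; linarith

lemma Fd_pos (E : EastProcess) (ν : Measure Config) (n : ℤ) (ω : Config) : 0 < Fd E ν n ω :=
  lt_of_lt_of_le one_pos (Fd_ge E ν n ω)

lemma gd_dep (E : EastProcess) (ν : Measure Config) (n : ℤ) :
    DependsOnF (gd E ν n) ↑(Finset.Icc 1 n) := dens_dep _ _ _

lemma gd_cyl (E : EastProcess) (ν : Measure Config) (n : ℤ) : IsCylinder (gd E ν n) :=
  ⟨_, gd_dep E ν n⟩

lemma Fd_dep (E : EastProcess) (ν : Measure Config) (n : ℤ) :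
    DependsOnF (Fd E ν n) ↑(Finset.Icc 1 n) := fun ω ω' h => by
  simp only [Fd, gd_dep E ν n ω ω' h]

lemma Fd_cyl (E : EastProcess) (ν : Measure Config) (n : ℤ) : IsCylinder (Fd E ν n) :=
  ⟨_, Fd_dep E ν n⟩

lemma gd_int (E : EastProcess) (ν : Measure Config) [IsProbabilityMeasure ν] {n : ℤ}
    {φ : Config → ℝ} (h : DependsOnF φ ↑(Finset.Icc 1 n)) :
    ∫ ω, φ ω ∂ν = ∫ ω, gd E ν n ω * φ ω ∂E.μ :=
  integral_dens h ν E.μ fun σ => μ_cyl_pos E _ σ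

lemma Fd_total (E : EastProcess) (ν : Measure Config) [IsProbabilityMeasure ν] (n : ℤ) :
    ∫ ω, Fd E ν n ω ∂E.μ = 2 := by
  have h := gd_int E ν (n := n) (φ := fun _ => (1:ℝ)) (fun _ _ _ => rfl)
  simp only [mul_one] at h
  unfold Fd
  rw [integral_add (integ (gd_cyl E ν n) _) (integrable_const _), ← h]
  simp; norm_num

/-- The local Dirichlet energies. -/
def an (E : EastProcess) (ν : Measure Config) (n x : ℤ) : ℝ :=
  ∫ ω, cc x ω * rr E.p x ω * (√(Fd E ν n (flipAt ω x)) - √(Fd E ν n ω)) ^ 2 ∂E.μ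

lemma an_nonneg (E : EastProcess) (ν : Measure Config) (n x : ℤ) : 0 ≤ an E ν n x :=
  integral_nonneg fun ω =>
    mul_nonneg (mul_nonneg (cc_nonneg x ω) (rr_nonneg E x ω)) (sq_nonneg _)

lemma log_ineq {a b : ℝ} (ha : 0 < a) (hb : 0 < b) :
    2 * (√a - √b) ^ 2 ≤ (a - b) * (Real.log a - Real.log b) := by
  wlog hab : b ≤ a generalizing a b with H
  · have := H hb ha (by linarith)
    nlinarith
  set s := √a with hs
  set t := √b with ht
  have hs0 : 0 < s := Real.sqrt_pos.2 ha
  have ht0 : 0 < t := Real.sqrt_pos.2 hb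
  have hts : t ≤ s := Real.sqrt_le_sqrt hab
  have ea : a = s ^ 2 := (Real.sq_sqrt ha.le).symm
  have eb : b = t ^ 2 := (Real.sq_sqrt hb.le).symm
  rw [ea, eb, Real.log_pow, Real.log_pow]
  have h1 : Real.log (t / s) ≤ t / s - 1 := Real.log_le_sub_one_of_pos (by positivity)
  rw [Real.log_div ht0.ne' hs0.ne'] at h1
  have h2 : (s - t) / s ≤ Real.log s - Real.log t := by
    have : (s - t) / s = 1 - t / s := by field_simp
    linarith
  have h3 : (s - t) / s * (s + t) ≥ s - t := by
    rw [ge_iff_le, div_mul_eq_mul_div, le_div_iff₀ hs0]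
    nlinarith
  have h4 : (s - t) * (s + t) * ((s - t) / s) ≤ (s - t) * (s + t) * (Real.log s - Real.log t) :=
    mul_le_mul_of_nonneg_left h2 (mul_nonneg (by linarith) (by linarith))
  push_cast
  nlinarith [mul_le_mul_of_nonneg_left h3 (sub_nonneg.2 hts)]

/-- Lower bound of single-site weights. -/
def mm (E : EastProcess) : ℝ := min E.p (1 - E.p)

lemma mm_pos (E : EastProcess) : 0 < mm E := lt_min E.hp0 (by have := E.hp1; linarith)

lemma mm_le (E : EastProcess) (b : Bool) : mm E ≤ (if b then E.p else 1 - E.p) := by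
  cases b
  · simp [mm]
  · simp [mm]

lemma Icc_succ {n : ℤ} (hn : 0 ≤ n) : Finset.Icc 1 (n + 1) = insert (n + 1) (Finset.Icc 1 n) := by
  ext x; simp; omega

lemma μ_succ (E : EastProcess) {n : ℤ} (hn : 0 ≤ n) (ω : Config) :
    E.μ.real (cyl (Finset.Icc 1 (n + 1)) ω)
      = (if ω (n + 1) then E.p else 1 - E.p) * E.μ.real (cyl (Finset.Icc 1 n) ω) := by
  rw [μ_cyl_real, μ_cyl_real, Icc_succ hn, Finset.prod_insert (by simp)]

lemma gd_succ_le (E : EastProcess) (ν : Measure Config) [IsProbabilityMeasure ν] {n : ℤ}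
    (hn : 0 ≤ n) (ω : Config) : gd E ν (n + 1) ω ≤ gd E ν n ω / mm E := by
  unfold gd dens
  rw [μ_succ E hn, div_div]
  have h1 := μ_cyl_pos E (Finset.Icc 1 n) ω
  refine div_le_div₀ measureReal_nonneg (measureReal_mono ?_) (mul_pos h1 (mm_pos E)) ?_
  · intro η hη x hx
    exact hη x (by simp at hx ⊢; omega)
  · rw [mul_comm]
    exact mul_le_mul_of_nonneg_right (mm_le E _) h1.le

lemma bterm (E : EastProcess) (ν : Measure Config) [IsProbabilityMeasure ν] {n : ℤ}
    (hn : 0 ≤ n) {w : Config → ℝ} (hw0 : ∀ ω, 0 ≤ w ω)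
    (hw : DependsOnF w ↑(Finset.Icc 1 (n + 1))) {G : Config → ℝ} (hG0 : ∀ ω, 0 < G ω)
    (hG : DependsOnF G ↑(Finset.Icc 1 (n + 1))) :
    ∫ ω, w ω * (Real.log (G ω) - Real.log (Fd E ν n ω)) ∂ν ≤ (mm E)⁻¹ * ∫ ω, w ω * G ω ∂E.μ := by
  have hF : DependsOnF (Fd E ν n) ↑(Finset.Icc 1 (n + 1)) :=
    dep_mono (Fd_dep E ν n) (by intro x hx; simp at hx ⊢; omega)
  have hd : DependsOnF (fun ω => w ω * (G ω / Fd E ν n ω)) ↑(Finset.Icc 1 (n + 1)) :=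
    fun ω ω' h => by simp only [hw _ _ h, hG _ _ h, hF _ _ h]
  have hd' : DependsOnF (fun ω => w ω * (Real.log (G ω) - Real.log (Fd E ν n ω)))
      ↑(Finset.Icc 1 (n + 1)) :=
    fun ω ω' h => by simp only [hw _ _ h, hG _ _ h, hF _ _ h]
  calc ∫ ω, w ω * (Real.log (G ω) - Real.log (Fd E ν n ω)) ∂ν
      ≤ ∫ ω, w ω * (G ω / Fd E ν n ω) ∂ν := by
        refine integral_mono (integ ⟨_, hd'⟩ _) (integ ⟨_, hd⟩ _) fun ω => ?_
        refine mul_le_mul_of_nonneg_left ?_ (hw0 ω)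
        rw [← Real.log_div (hG0 ω).ne' (Fd_pos E ν n ω).ne']
        have := Real.log_le_sub_one_of_pos (div_pos (hG0 ω) (Fd_pos E ν n ω))
        linarith
    _ = ∫ ω, gd E ν (n + 1) ω * (w ω * (G ω / Fd E ν n ω)) ∂E.μ := gd_int E ν hd
    _ ≤ ∫ ω, (mm E)⁻¹ * (w ω * G ω) ∂E.μ := by
        refine integral_mono (integ (cyl_mul (gd_cyl E ν _) ⟨_, hd⟩) _)
          (integ (cyl_mul (cyl_const _) (cyl_mul ⟨_, hw⟩ ⟨_, hG⟩)) _) fun ω => ?_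
        have h1 : gd E ν (n + 1) ω ≤ (mm E)⁻¹ * Fd E ν n ω := by
          refine (gd_succ_le E ν hn ω).trans ?_
          rw [div_eq_inv_mul]
          refine mul_le_mul_of_nonneg_left ?_ (inv_nonneg.2 (mm_pos E).le)
          unfold Fd; linarith
        have h2 : 0 ≤ w ω * (G ω / Fd E ν n ω) :=
          mul_nonneg (hw0 ω) (div_nonneg (hG0 ω).le (Fd_pos E ν n ω).le)
        refine (mul_le_mul_of_nonneg_right h1 h2).trans (le_of_eq ?_)
        have := (Fd_pos E ν n ω).ne'
        field_simp
    _ = _ := integral_const_mul _ _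

lemma cc_dep {x : ℤ} {S : Set ℤ} (h : x + 1 ∈ S) : DependsOnF (cc x) S := fun ω ω' hh => by
  simp only [cc, hh _ h]

lemma rr_dep (p : ℝ) {x : ℤ} {S : Set ℤ} (h : x ∈ S) : DependsOnF (rr p x) S := fun ω ω' hh => by
  simp only [rr, hh _ h]

lemma energy_bound {E : EastProcess} {ν : Measure Config} (I : Inv E ν) {n : ℤ} (hn : 1 ≤ n) :
    ∑ x ∈ Finset.Icc 1 (n - 1), an E ν n x ≤ 6 * (mm E)⁻¹ := by
  have := I.prob
  set F := Fd E ν n with hF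
  have hFd : DependsOnF F ↑(Finset.Icc 1 n) := Fd_dep E ν n
  have hFc : IsCylinder F := Fd_cyl E ν n
  have hFpos : ∀ ω, 0 < F ω := Fd_pos E ν n
  have hm := inv_nonneg.2 (mm_pos E).le
  have hp0 := E.hp0
  have hp1 := E.hp1
  set u : Config → ℝ := fun ω => Real.log (F ω) with hu
  have hud : DependsOnF u ↑(Finset.Icc 1 n) := fun ω ω' h => by simp only [hu, hFd _ _ h]
  have huc : IsCylinder u := ⟨_, hud⟩
  have hA := factA I hn hud
  have hsplit : Finset.Icc 1 n = insert n (Finset.Icc 1 (n - 1)) := by ext x; simp; omega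
  rw [hsplit, Finset.sum_insert (by simp)] at hA
  have hdf : ∀ x ∈ Finset.Icc 1 n, ∀ G : Config → ℝ, DependsOnF G ↑(Finset.Icc 1 n) →
      DependsOnF (fun ω => G (flipAt ω x)) ↑(Finset.Icc 1 n) := by
    intro x hx G hG ω ω' h
    refine hG _ _ fun y hy => ?_
    simp only [flipAt, h y hy, h x hx]
  -- bulk
  have hbulk : ∀ x ∈ Finset.Icc 1 (n - 1),
      ∫ ω, cc x ω * rr E.p x ω * (u (flipAt ω x) - u ω) ∂ν ≤ - an E ν n x := by
    intro x hx
    have hx' : 1 ≤ x ∧ x ≤ n - 1 := by simpa using hx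
    have hxm : x ∈ Finset.Icc 1 n := by simp; omega
    have hd : DependsOnF (fun ω => cc x ω * rr E.p x ω * (u (flipAt ω x) - u ω))
        ↑(Finset.Icc 1 n) := fun ω ω' h => by
      have h1 := cc_dep (x := x) (S := ↑(Finset.Icc 1 n)) (by simp; omega) ω ω' h
      have h2 := rr_dep E.p (x := x) (S := ↑(Finset.Icc 1 n)) (by simpa using hxm) ω ω' h
      have h3 : u (flipAt ω x) = u (flipAt ω' x) := hdf x hxm u hud ω ω' h
      simp only [h1, h2, h3, hud ω ω' h]
    rw [gd_int E ν hd, byparts E x (cc_cyl x) (gd_cyl E ν n) huc (fun ω => cc_flip (by omega) ω)]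
    have : an E ν n x = (1/2) * ∫ ω, cc x ω * rr E.p x ω *
        (2 * (√(F (flipAt ω x)) - √(F ω)) ^ 2) ∂E.μ := by
      rw [← integral_const_mul]
      refine integral_congr_ae (ae_of_all _ fun ω => ?_)
      simp only [← hF]; ring
    rw [this]
    have h4 : ∫ ω, cc x ω * rr E.p x ω * (2 * (√(F (flipAt ω x)) - √(F ω)) ^ 2) ∂E.μ ≤
        ∫ ω, cc x ω * rr E.p x ω *
          ((gd E ν n (flipAt ω x) - gd E ν n ω) * (u (flipAt ω x) - u ω)) ∂E.μ := by
      refine integral_mono (integ ?_ _) (integ ?_ _) fun ω => ?_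
      · exact cyl_mul (cyl_mul (cc_cyl x) (rr_cyl _ x)) (cyl_mul (cyl_const 2) (cyl_pow
          (cyl_sub (cyl_comp Real.sqrt (cyl_flip hFc x)) (cyl_comp Real.sqrt hFc)) 2))
      · exact cyl_mul (cyl_mul (cc_cyl x) (rr_cyl _ x)) (cyl_mul
          (cyl_sub (cyl_flip (gd_cyl E ν n) x) (gd_cyl E ν n)) (cyl_sub (cyl_flip huc x) huc))
      · refine mul_le_mul_of_nonneg_left ?_ (mul_nonneg (cc_nonneg x ω) (rr_nonneg E x ω))
        have := log_ineq (hFpos (flipAt ω x)) (hFpos ω)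
        have e : F (flipAt ω x) - F ω = gd E ν n (flipAt ω x) - gd E ν n ω := by
          simp only [hF, Fd]; ring
        rw [e] at this
        exact this
    linarith
  have hFlarge : DependsOnF F ↑(Finset.Icc 1 (n + 1)) :=
    dep_mono hFd (by intro x hx; simp at hx ⊢; omega)
  have hFn : ∫ ω, F ω ∂E.μ = 2 := Fd_total E ν n
  -- last site
  have hlast : ∫ ω, cc n ω * rr E.p n ω * (u (flipAt ω n) - u ω) ∂ν ≤ (mm E)⁻¹ * 2 := by
    have hG : DependsOnF (fun ω => F (flipAt ω n)) ↑(Finset.Icc 1 (n + 1)) :=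
      dep_mono (hdf n (by simp; omega) F hFd) (by intro x hx; simp at hx ⊢; omega)
    refine (bterm E ν (n := n) (by omega) (w := fun ω => cc n ω * rr E.p n ω)
      (fun ω => mul_nonneg (cc_nonneg n ω) (rr_nonneg E n ω)) ?_
      (G := fun ω => F (flipAt ω n)) (fun ω => hFpos _) hG).trans ?_
    · intro ω ω' h
      have h1 := cc_dep (x := n) (S := ↑(Finset.Icc 1 (n + 1))) (by simp; omega) ω ω' h
      have h2 := rr_dep E.p (x := n) (S := ↑(Finset.Icc 1 (n + 1))) (by simp; omega) ω ω' h
      simp only [h1, h2]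
    · refine mul_le_mul_of_nonneg_left ?_ hm
      calc ∫ ω, cc n ω * rr E.p n ω * F (flipAt ω n) ∂E.μ
          ≤ ∫ ω, rr E.p n ω * F (flipAt ω n) ∂E.μ := by
            refine integral_mono (integ (cyl_mul (cyl_mul (cc_cyl n) (rr_cyl _ n)) (cyl_flip hFc n)) _)
              (integ (cyl_mul (rr_cyl _ n) (cyl_flip hFc n)) _) fun ω => ?_
            refine mul_le_mul_of_nonneg_right ?_ (hFpos _).le
            exact mul_le_of_le_one_left (rr_nonneg E n ω) (cc_le n ω)
        _ = ∫ ω, rr E.p n ω * F ω ∂E.μ := reversible E n hFc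
        _ ≤ ∫ ω, F ω ∂E.μ := by
            refine integral_mono (integ (cyl_mul (rr_cyl _ n) hFc) _) (integ hFc _) fun ω => ?_
            exact mul_le_of_le_one_left (hFpos _).le (rr_le E n ω)
        _ = 2 := hFn
  have hright : ∫ ω, cc 0 ω * E.p * (u (shift 1 ω) - u ω) ∂ν ≤ (mm E)⁻¹ * 2 := by
    have hG : DependsOnF (fun ω => F (shift 1 ω)) ↑(Finset.Icc 1 (n + 1)) := fun ω ω' h =>
      hFd _ _ fun x hx => h _ (by simp at hx ⊢; omega)
    refine (bterm E ν (n := n) (by omega) (w := fun ω => cc 0 ω * E.p)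
      (fun ω => mul_nonneg (cc_nonneg 0 ω) hp0.le) ?_
      (G := fun ω => F (shift 1 ω)) (fun ω => hFpos _) hG).trans ?_
    · intro ω ω' h
      have h1 := cc_dep (x := 0) (S := ↑(Finset.Icc 1 (n + 1))) (by simp; omega) ω ω' h
      simp only [h1]
    · refine mul_le_mul_of_nonneg_left ?_ hm
      calc ∫ ω, cc 0 ω * E.p * F (shift 1 ω) ∂E.μ
          ≤ ∫ ω, F (shift 1 ω) ∂E.μ := by
            refine integral_mono (integ (cyl_mul (cyl_mul (cc_cyl 0) (cyl_const _)) (cyl_shift hFc 1)) _)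
              (integ (cyl_shift hFc 1) _) fun ω => ?_
            refine mul_le_of_le_one_left (hFpos _).le ?_
            exact mul_le_one₀ (cc_le 0 ω) hp0.le hp1.le
        _ = 2 := by rw [integral_shift E 1 hFc, hFn]
  have hleft : ∫ ω, (1 - E.p) * (u (shift (-1) ω) - u ω) ∂ν ≤ (mm E)⁻¹ * 2 := by
    set G : Config → ℝ := fun ω => F (Function.update (shift (-1) ω) 1 false) with hGdef
    have hG : DependsOnF G ↑(Finset.Icc 1 (n + 1)) := fun ω ω' h =>
      hFd _ _ fun x hx => by
        by_cases hx1 : x = 1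
        · simp [hx1]
        · simp only [Function.update_apply, hx1, if_false, shift]
          exact h _ (by simp at hx ⊢; omega)
    have e1 : ∫ ω, (1 - E.p) * (u (shift (-1) ω) - u ω) ∂ν
        = ∫ ω, (1 - E.p) * (Real.log (G ω) - Real.log (F ω)) ∂ν := by
      refine integral_congr_ae ?_
      filter_upwards [ae_LO₀ I.lo] with ω hω
      have h0 := (LO₀_iff.1 hω).1
      have : Function.update (shift (-1) ω) 1 false = shift (-1) ω := by
        have : false = shift (-1) ω 1 := by simp [shift, h0]
        rw [this, Function.update_eq_self]
      simp only [hu, hGdef, this]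
    rw [e1]
    refine (bterm E ν (n := n) (by omega) (w := fun _ => 1 - E.p)
      (fun ω => by linarith) (fun _ _ _ => rfl) (G := G) (fun ω => hFpos _) hG).trans ?_
    refine mul_le_mul_of_nonneg_left ?_ hm
    have hc1 : IsCylinder (fun ω => F (Function.update ω 1 false)) := cyl_update hFc 1 false
    have hc2 : IsCylinder (fun ω => F (Function.update ω 1 true)) := cyl_update hFc 1 true
    rw [integral_const_mul, hGdef,
      integral_shift E (-1) (φ := fun ω => F (Function.update ω 1 false)) hc1, ← hFn,
      resample E 1 hFc, ← integral_const_mul]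
    refine integral_mono (integ (cyl_mul (cyl_const _) hc1) _)
      (integ (cyl_add (cyl_mul (cyl_const _) hc2) (cyl_mul (cyl_const _) hc1)) _) fun ω => ?_
    have := mul_pos hp0 (hFpos (Function.update ω 1 true))
    simp only
    linarith
  have hs := Finset.sum_le_sum hbulk
  rw [Finset.sum_neg_distrib] at hs
  linarith

/-! ### Monotonicity of the energies -/

lemma gd_avg (E : EastProcess) (ν : Measure Config) [IsProbabilityMeasure ν] {n : ℤ}
    (hn : 0 ≤ n) (ω : Config) :
    gd E ν n ω = E.p * gd E ν (n + 1) (Function.update ω (n + 1) true)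
      + (1 - E.p) * gd E ν (n + 1) (Function.update ω (n + 1) false) := by
  have hp0 := E.hp0
  have hp1 := E.hp1
  have hupd : ∀ b, cyl (Finset.Icc 1 n) (Function.update ω (n + 1) b) = cyl (Finset.Icc 1 n) ω :=
    fun b => cyl_congr fun x hx => by
      rw [Function.update_of_ne]; simp at hx; omega
  have hpos := μ_cyl_pos E (Finset.Icc 1 n) ω
  have hset : ν.real (cyl (Finset.Icc 1 n) ω)
      = ν.real (cyl (Finset.Icc 1 (n + 1)) (Function.update ω (n + 1) true))
        + ν.real (cyl (Finset.Icc 1 (n + 1)) (Function.update ω (n + 1) false)) := by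
    have hc : ∀ b, cyl (Finset.Icc 1 (n + 1)) (Function.update ω (n + 1) b)
        = cyl (Finset.Icc 1 n) ω ∩ {η | η (n + 1) = b} := by
      intro b
      rw [← hupd b, Icc_succ hn]
      ext η
      simp only [cyl, Finset.mem_insert, forall_eq_or_imp, Function.update_self, Set.mem_inter_iff,
        Set.mem_ofPred_eq]
      tauto
    rw [hc, hc, ← measureReal_inter_add_sdiff (s := cyl (Finset.Icc 1 n) ω) (meas_site (n + 1) true)]
    congr 2
    ext η
    simp
  unfold gd dens
  rw [μ_succ E hn, μ_succ E hn, hupd, hupd, hset]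
  simp only [Function.update_self, if_true]
  have : (1 - E.p) ≠ 0 := by linarith
  have := hpos.ne'
  have := hp0.ne'
  simp
  field_simp

lemma two_point {p a₁ a₀ b₁ b₀ : ℝ} (hp0 : 0 ≤ p) (hp1 : p ≤ 1) (ha₁ : 0 ≤ a₁) (ha₀ : 0 ≤ a₀)
    (hb₁ : 0 ≤ b₁) (hb₀ : 0 ≤ b₀) :
    (√(p * a₁ + (1 - p) * a₀) - √(p * b₁ + (1 - p) * b₀)) ^ 2
      ≤ p * (√a₁ - √b₁) ^ 2 + (1 - p) * (√a₀ - √b₀) ^ 2 := by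
  have hq : 0 ≤ 1 - p := by linarith
  have hA : 0 ≤ p * a₁ + (1 - p) * a₀ := by positivity
  have hB : 0 ≤ p * b₁ + (1 - p) * b₀ := by positivity
  have e1 := Real.sq_sqrt ha₁
  have e2 := Real.sq_sqrt ha₀
  have e3 := Real.sq_sqrt hb₁
  have e4 := Real.sq_sqrt hb₀
  have e5 := Real.sq_sqrt hA
  have e6 := Real.sq_sqrt hB
  have hcs : p * (√a₁ * √b₁) + (1 - p) * (√a₀ * √b₀)
      ≤ √(p * a₁ + (1 - p) * a₀) * √(p * b₁ + (1 - p) * b₀) := by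
    rw [← Real.sqrt_mul hA]
    refine Real.le_sqrt_of_sq_le ?_
    set s₁ := √a₁
    set s₀ := √a₀
    set t₁ := √b₁
    set t₀ := √b₀
    rw [← e1, ← e2, ← e3, ← e4]
    nlinarith [mul_nonneg (mul_nonneg hp0 hq) (sq_nonneg (s₁ * t₀ - s₀ * t₁))]
  nlinarith

lemma an_mono (E : EastProcess) (ν : Measure Config) [IsProbabilityMeasure ν] {n x : ℤ}
    (hx : 1 ≤ x) (hxn : x ≤ n - 1) : an E ν n x ≤ an E ν (n + 1) x := by
  have hp0 := E.hp0
  have hp1 := E.hp1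
  have hFa : ∀ ω, Fd E ν n ω = E.p * Fd E ν (n + 1) (Function.update ω (n + 1) true)
      + (1 - E.p) * Fd E ν (n + 1) (Function.update ω (n + 1) false) := by
    intro ω; unfold Fd; rw [gd_avg E ν (by omega) ω]; ring
  have hcomm : ∀ ω b, flipAt (Function.update ω (n + 1) b) x
      = Function.update (flipAt ω x) (n + 1) b := by
    intro ω b; funext y
    simp only [flipAt, Function.update_apply]
    by_cases h2 : y = n + 1
    · subst h2
      rw [if_neg (by omega), if_pos rfl, if_pos rfl]
    · by_cases h1 : y = x
      · subst h1; simp [h2]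
      · simp [h1, h2]
  have hc : ∀ n, IsCylinder (fun ω => cc x ω * rr E.p x ω *
      (√(Fd E ν n (flipAt ω x)) - √(Fd E ν n ω)) ^ 2) := fun n =>
    cyl_mul (cyl_mul (cc_cyl x) (rr_cyl _ x)) (cyl_pow (cyl_sub
      (cyl_comp Real.sqrt (cyl_flip (Fd_cyl E ν n) x)) (cyl_comp Real.sqrt (Fd_cyl E ν n))) 2)
  unfold an
  rw [resample E (n + 1) (hc (n + 1))]
  refine integral_mono (integ (hc n) _) (integ (cyl_add
    (cyl_mul (cyl_const _) (cyl_update (hc (n + 1)) (n + 1) true))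
    (cyl_mul (cyl_const _) (cyl_update (hc (n + 1)) (n + 1) false))) _) fun ω => ?_
  have h1 : ∀ b, cc x (Function.update ω (n + 1) b) = cc x ω := fun b => by
    simp only [cc]; rw [Function.update_of_ne (by omega)]
  have h2 : ∀ b, rr E.p x (Function.update ω (n + 1) b) = rr E.p x ω := fun b => by
    simp only [rr]; rw [Function.update_of_ne (by omega)]
  simp only [h1, h2, hcomm]
  rw [hFa ω, hFa (flipAt ω x)]
  have h3 := two_point hp0.le hp1.le
    (Fd_pos E ν (n + 1) (Function.update (flipAt ω x) (n + 1) true)).le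
    (Fd_pos E ν (n + 1) (Function.update (flipAt ω x) (n + 1) false)).le
    (Fd_pos E ν (n + 1) (Function.update ω (n + 1) true)).le
    (Fd_pos E ν (n + 1) (Function.update ω (n + 1) false)).le
  have h4 := mul_le_mul_of_nonneg_left h3 (mul_nonneg (cc_nonneg x ω) (rr_nonneg E x ω))
  refine h4.trans (le_of_eq ?_)
  ring

lemma an_mono' (E : EastProcess) (ν : Measure Config) [IsProbabilityMeasure ν] {n m x : ℤ}
    (hx : 1 ≤ x) (hxn : x ≤ n - 1) (hnm : n ≤ m) : an E ν n x ≤ an E ν m x := by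
  induction m, hnm using Int.leInduction with
  | base => exact le_rfl
  | succ m hm ih => exact ih.trans (an_mono E ν hx (by omega))

lemma tail_energy {E : EastProcess} {ν : Measure Config} (I : Inv E ν) {ε : ℝ} (hε : 0 < ε) :
    ∃ L : ℤ, 1 ≤ L ∧ ∀ n : ℤ, ∑ x ∈ Finset.Icc L (n - 1), an E ν n x ≤ ε := by
  have := I.prob
  set T : ℤ → ℝ := fun n => ∑ x ∈ Finset.Icc 1 (n - 1), an E ν n x with hT
  set S : Set ℝ := Set.image T {n | 1 ≤ n} with hS
  have hbdd : BddAbove S := ⟨6 * (mm E)⁻¹, by rintro _ ⟨n, hn, rfl⟩; exact energy_bound I hn⟩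
  have hne : S.Nonempty := ⟨T 1, 1, by simp, rfl⟩
  obtain ⟨_, ⟨L, hL, rfl⟩, hlt⟩ := exists_lt_of_lt_csSup hne (show sSup S - ε < sSup S by linarith)
  have hL : 1 ≤ L := hL
  refine ⟨L, hL, fun n => ?_⟩
  by_cases hn : n < L + 1
  · rw [Finset.Icc_eq_empty (by omega)]; simpa using hε.le
  push Not at hn
  have h1 : T n ≤ sSup S := le_csSup hbdd ⟨n, show 1 ≤ n by omega, rfl⟩
  have h2 : T n = ∑ x ∈ Finset.Icc 1 (L - 1), an E ν n x + ∑ x ∈ Finset.Icc L (n - 1), an E ν n x := by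
    rw [← Finset.sum_union]
    · show ∑ x ∈ Finset.Icc 1 (n - 1), an E ν n x = _
      refine Finset.sum_congr ?_ fun _ _ => rfl
      ext x; simp; omega
    · refine Finset.disjoint_left.2 fun x h1 h2 => ?_
      simp at h1 h2; omega
  have h3 : T L ≤ ∑ x ∈ Finset.Icc 1 (L - 1), an E ν n x :=
    Finset.sum_le_sum fun x hx => by
      simp at hx; exact an_mono' E ν hx.1 (by omega) (by omega)
  linarith

end East

namespace East

/-! ### Variance step -/

lemma glue_flip {W : Finset ℤ} {x : ℤ} (hx : x ∈ W) (ζ ω : Config) :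
    glue W (flipAt ζ x) ω = flipAt (glue W ζ ω) x := by
  funext y
  by_cases h : y = x
  · subst h; simp [glue, flipAt, hx]
  · by_cases hy : y ∈ W <;> simp [glue, flipAt, h, hy]

lemma var_eq (E : EastProcess) {h : Config → ℝ} (hh : IsCylinder h) :
    variance h E.μ = ∫ ζ, (h ζ - ∫ ζ', h ζ' ∂E.μ) ^ 2 ∂E.μ := by
  rw [variance_eq_integral (meas hh).aemeasurable]

lemma sq_int_le (E : EastProcess) {h : Config → ℝ} (hh : IsCylinder h) :
    (∫ ζ, h ζ ∂E.μ) ^ 2 ≤ ∫ ζ, h ζ ^ 2 ∂E.μ := by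
  have := E.μprob
  set a := ∫ ζ, h ζ ∂E.μ with ha
  have h1 : 0 ≤ ∫ ζ, (h ζ - a) ^ 2 ∂E.μ := integral_nonneg fun _ => sq_nonneg _
  have h2 : ∫ ζ, (h ζ - a) ^ 2 ∂E.μ = ∫ ζ, h ζ ^ 2 ∂E.μ - a ^ 2 := by
    have : ∀ ζ, (h ζ - a) ^ 2 = h ζ ^ 2 - (2 * a * h ζ - a ^ 2) := fun ζ => by ring
    simp only [this]
    rw [integral_sub (integ (cyl_pow hh 2) _) (integ (cyl_sub (cyl_mul (cyl_const _) hh)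
      (cyl_const _)) _), integral_sub (integ (cyl_mul (cyl_const _) hh) _)
      (integrable_const _), integral_const_mul, ← ha]
    simp; ring
  linarith

/-- The conditional average over the window `W`. -/
def av (E : EastProcess) (W : Finset ℤ) (f : Config → ℝ) (ω : Config) : ℝ :=
  ∫ ζ, f (glue W ζ ω) ∂E.μ

lemma av_cyl (E : EastProcess) (W : Finset ℤ) {f : Config → ℝ} (hf : IsCylinder f) :
    IsCylinder (av E W f) := cyl_glue_int E hf W

lemma glue_glue {V W : Finset ℤ} (h : W ⊆ V) (ζ ζ' ω : Config) :
    glue V ζ (glue W ζ' ω) = glue V ζ ω := by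
  funext y
  by_cases hy : y ∈ V
  · simp [glue, hy]
  · have : y ∉ W := fun hh => hy (h hh)
    simp [glue, hy, this]

lemma av_glue (E : EastProcess) (W : Finset ℤ) (f : Config → ℝ) (ζ ω : Config) :
    av E W f (glue W ζ ω) = av E W f ω := by
  unfold av; simp only [glue_glue (Finset.Subset.refl W)]

lemma av_nonneg (E : EastProcess) (W : Finset ℤ) {f : Config → ℝ} (h : ∀ ω, 0 ≤ f ω)
    (ω : Config) : 0 ≤ av E W f ω := integral_nonneg fun _ => h _

/-- `e` does not feel the coordinates in `W`. -/
lemma int_av (E : EastProcess) (W : Finset ℤ) {e f : Config → ℝ} (he : IsCylinder e)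
    (hf : IsCylinder f) (hW : ∀ ζ ω, e (glue W ζ ω) = e ω) :
    ∫ ω, e ω * av E W f ω ∂E.μ = ∫ ω, e ω * f ω ∂E.μ := by
  rw [integral_glue E W (cyl_mul he hf)]
  refine integral_congr_ae (ae_of_all _ fun ω => ?_)
  simp only [hW, av]
  rw [integral_const_mul]

lemma var_step (E : EastProcess) {L m : ℤ} {e f : Config → ℝ} (he : IsCylinder e)
    (hf : IsCylinder f) (he0 : ∀ ω, 0 ≤ e ω) (hem : ∀ ω, ω m = true → e ω = 0)
    (hW : ∀ ζ ω, e (glue (Finset.Icc L (m - 1)) ζ ω) = e ω) :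
    gap E * ∫ ω, e ω * (f ω - av E (Finset.Icc L (m - 1)) f ω) ^ 2 ∂E.μ ≤
      (1 / 2) * ∑ x ∈ Finset.Icc L (m - 1),
        ∫ ω, e ω * (cc x ω * rr E.p x ω * (f (flipAt ω x) - f ω) ^ 2) ∂E.μ := by
  have := E.μprob
  set W := Finset.Icc L (m - 1) with hWd
  have hav := av_cyl E W hf
  have hcx : ∀ x, IsCylinder (fun ω => cc x ω * rr E.p x ω * (f (flipAt ω x) - f ω) ^ 2) :=
    fun x => cyl_mul (cyl_mul (cc_cyl x) (rr_cyl _ x)) (cyl_pow (cyl_sub (cyl_flip hf x) hf) 2)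
  have hL : ∫ ω, e ω * (f ω - av E W f ω) ^ 2 ∂E.μ =
      ∫ ω, e ω * av E W (fun ω => (f ω - av E W f ω) ^ 2) ω ∂E.μ :=
    (int_av E W he (cyl_pow (cyl_sub hf hav) 2) hW).symm
  have hR : ∀ x, ∫ ω, e ω * (cc x ω * rr E.p x ω * (f (flipAt ω x) - f ω) ^ 2) ∂E.μ =
      ∫ ω, e ω * av E W (fun ω => cc x ω * rr E.p x ω * (f (flipAt ω x) - f ω) ^ 2) ω ∂E.μ :=
    fun x => (int_av E W he (hcx x) hW).symm
  simp only [hL, hR]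
  rw [← integral_const_mul, ← integral_finsetSum _ fun x _ =>
    integ (cyl_mul he (av_cyl E W (hcx x))) _, ← integral_const_mul]
  refine integral_mono (integ (cyl_mul (cyl_const _) (cyl_mul he
    (av_cyl E W (cyl_pow (cyl_sub hf hav) 2)))) _)
    (integ (cyl_mul (cyl_const _) (cyl_sum _ fun x _ => cyl_mul he (av_cyl E W (hcx x)))) _)
    fun ω => ?_
  show gap E * (e ω * _) ≤ 1 / 2 * ∑ x ∈ W, e ω * _
  rw [← Finset.mul_sum]
  cases hm : ω m
  swap
  · simp [hem ω hm]
  have hdep : DependsOnF (fun ζ => f (glue W ζ ω)) ↑W := fun ζ ζ' h => by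
    show f _ = f _
    congr 1; funext y
    by_cases hy : y ∈ W
    · simp [glue, hy, h y hy]
    · simp [glue, hy]
  have h1 := gap_bound E hdep
  rw [var_eq E ⟨W, hdep⟩] at h1
  have h2 : av E W (fun ω => (f ω - av E W f ω) ^ 2) ω =
      ∫ ζ, (f (glue W ζ ω) - ∫ ζ', f (glue W ζ' ω) ∂E.μ) ^ 2 ∂E.μ := by
    conv_lhs => unfold av
    refine integral_congr_ae (ae_of_all _ fun ζ => ?_)
    have := av_glue E W f ζ ω
    simp only [av] at this ⊢
    rw [this]
  rw [← h2] at h1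
  have h3 : ∀ x ∈ W, ∫ ζ, cc x ζ * rr E.p x ζ *
      (f (glue W (flipAt ζ x) ω) - f (glue W ζ ω)) ^ 2 ∂E.μ ≤
      av E W (fun ω => cc x ω * rr E.p x ω * (f (flipAt ω x) - f ω) ^ 2) ω := by
    intro x hx
    unfold av
    refine integral_mono (integ (cyl_mul (cyl_mul (cc_cyl x) (rr_cyl _ x)) (cyl_pow (cyl_sub
      (cyl_flip (cyl_glue hf W ω) x) (cyl_glue hf W ω)) 2)) _)
      (integ (cyl_glue (hcx x) W ω) _) fun ζ => ?_
    show cc x ζ * rr E.p x ζ * (f (glue W (flipAt ζ x) ω) - f (glue W ζ ω)) ^ 2 ≤ _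
    rw [glue_flip hx]
    have hr : rr E.p x (glue W ζ ω) = rr E.p x ζ := by simp [rr, glue, hx]
    have hc : cc x ζ ≤ cc x (glue W ζ ω) := by
      by_cases hx1 : x + 1 ∈ W
      · simp [cc, glue, hx1]
      · have : x + 1 = m := by simp only [hWd, Finset.mem_Icc] at hx hx1; omega
        have h4 : cc x (glue W ζ ω) = 1 := by
          simp only [cc, glue, hx1, if_false]; rw [this, hm]; simp
        rw [h4]; exact cc_le x ζ
    simp only [hr]
    exact mul_le_mul_of_nonneg_right (mul_le_mul_of_nonneg_right hc (rr_nonneg E x ζ))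
      (sq_nonneg _)
  have h5 := h1.trans (mul_le_mul_of_nonneg_left (Finset.sum_le_sum h3)
    (by norm_num : (0:ℝ) ≤ 1 / 2))
  have h6 := mul_le_mul_of_nonneg_left h5 (he0 ω)
  calc gap E * (e ω * _) = e ω * (gap E * _) := by ring
    _ ≤ _ := h6
    _ = _ := by ring

/-- Pointwise domination by averages. -/
lemma le_av (E : EastProcess) (W : Finset ℤ) {f : Config → ℝ} (hf : IsCylinder f)
    (h0 : ∀ ω, 0 ≤ f ω) (ω : Config) : mm E ^ W.card * f ω ≤ av E W f ω := by
  have := E.μprob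
  have h1 : mm E ^ W.card ≤ E.μ.real (cyl W ω) := by
    rw [μ_cyl_real, ← Finset.prod_const]
    exact Finset.prod_le_prod (fun _ _ => (mm_pos E).le) fun x _ => mm_le E (ω x)
  have h2 : E.μ.real (cyl W ω) * f ω = ∫ ζ in cyl W ω, f (glue W ζ ω) ∂E.μ := by
    rw [setIntegral_congr_fun (g := fun _ => f ω) (meas_cyl W ω)]
    · simp
    · intro ζ hζ
      show f _ = f ω
      congr 1; funext y
      by_cases hy : y ∈ W
      · simp [glue, hy, hζ y hy]
      · simp [glue, hy]
  refine (mul_le_mul_of_nonneg_right h1 (h0 ω)).trans ?_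
  rw [h2]
  exact setIntegral_le_integral (integ (cyl_glue hf W ω) _) (ae_of_all _ fun ζ => h0 _)

/-- Decoupling. -/
lemma decouple (E : EastProcess) {L M m n : ℤ} (hL : 1 ≤ L) (hLM : L ≤ M) (hMm : M ≤ m)
    {e b F : Config → ℝ} (he : DependsOnF e ↑(Finset.Icc m n)) (hF : IsCylinder F)
    (hb : DependsOnF b ↑(Finset.Icc 1 (M - 1))) (he0 : ∀ ω, 0 ≤ e ω) (hb0 : ∀ ω, 0 ≤ b ω)
    (hF0 : ∀ ω, 0 ≤ F ω) :
    mm E ^ (Finset.Icc 1 (L - 1)).card *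
      ∫ ω, e ω * b ω * av E (Finset.Icc L (m - 1)) F ω ∂E.μ ≤
      (∫ ω, b ω ∂E.μ) * ∫ ω, e ω * F ω ∂E.μ := by
  have := E.μprob
  set W := Finset.Icc L (m - 1) with hW
  set U := Finset.Icc 1 (L - 1) with hU
  set V := Finset.Icc 1 (m - 1) with hV
  have hec : IsCylinder e := ⟨_, he⟩
  have hbc : IsCylinder b := ⟨_, hb⟩
  have hG := av_cyl E W hF
  have hK := av_cyl E U hG
  have heV : ∀ (S : Finset ℤ), S ⊆ V → ∀ ζ ω, e (glue S ζ ω) = e ω := fun S hS ζ ω =>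
    he _ _ fun x hx => by
      have : x ∉ S := fun h => by
        have := hS h
        simp [hV] at this hx; omega
      simp [glue, this]
  have hWV : W ⊆ V := Finset.Icc_subset_Icc (by omega) le_rfl
  have hUV : U ⊆ V := Finset.Icc_subset_Icc le_rfl (by omega)
  have h1 : mm E ^ U.card * ∫ ω, e ω * b ω * av E W F ω ∂E.μ ≤
      ∫ ω, e ω * b ω * av E U (av E W F) ω ∂E.μ := by
    rw [← integral_const_mul]
    refine integral_mono (integ (cyl_mul (cyl_const _) (cyl_mul (cyl_mul hec hbc) hG)) _)
      (integ (cyl_mul (cyl_mul hec hbc) hK) _) fun ω => ?_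
    have := mul_le_mul_of_nonneg_left (le_av E U hG (av_nonneg E W hF0) ω)
      (mul_nonneg (he0 ω) (hb0 ω))
    refine le_trans (le_of_eq ?_) this
    ring
  have hKV : ∀ ζ ω, av E U (av E W F) (glue V ζ ω) = av E U (av E W F) ω := fun ζ ω => by
    unfold av
    refine integral_congr_ae (ae_of_all _ fun ζ' => ?_)
    refine integral_congr_ae (ae_of_all _ fun ζ'' => ?_)
    show F _ = F _
    congr 1; funext y
    by_cases hy : y ∈ W
    · simp [glue, hy]
    by_cases hy' : y ∈ U
    · simp [glue, hy, hy']
    · have : y ∉ V := by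
        simp only [hW, hU, hV, Finset.mem_Icc] at *; omega
      simp [glue, hy, hy', this]
  have hbV : ∀ ζ ω, b (glue V ζ ω) = b ζ := fun ζ ω => hb _ _ fun x hx => by
    have : x ∈ V := by
      simp [hV] at hx ⊢; omega
    simp [glue, this]
  have h2 : ∫ ω, e ω * b ω * av E U (av E W F) ω ∂E.μ =
      (∫ ω, b ω ∂E.μ) * ∫ ω, e ω * av E U (av E W F) ω ∂E.μ := by
    rw [integral_glue E V (cyl_mul (cyl_mul hec hbc) hK), ← integral_const_mul]
    refine integral_congr_ae (ae_of_all _ fun ω => ?_)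
    simp only [hKV, hbV, heV V (Finset.Subset.refl _)]
    rw [integral_mul_const, integral_const_mul]; ring
  rw [int_av E U hec hG (heV U hUV), int_av E W hec hF (heV W hWV)] at h2
  exact h1.trans h2.le

/-- Indicator that `m` is the last zero in `[M,n]`. -/
def ez (n m : ℤ) (ω : Config) : ℝ := by
  classical
  exact if ω m = false ∧ ∀ i, m < i → i ≤ n → ω i = true then 1 else 0

lemma ez_nonneg (n m : ℤ) (ω : Config) : 0 ≤ ez n m ω := by
  unfold ez; split_ifs <;> norm_num

lemma ez_dep {n m : ℤ} (h : m ≤ n) : DependsOnF (ez n m) ↑(Finset.Icc m n) := by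
  intro ω ω' hh
  have h1 : ω m = ω' m := hh m (by simp [h])
  have h2 : ∀ i, m < i → i ≤ n → ω i = ω' i := fun i h1 h2 => hh i (by simp; omega)
  unfold ez
  congr 1
  rw [h1]
  refine propext (and_congr_right fun _ => forall_congr' fun i => ?_)
  exact forall₂_congr fun a b => by rw [h2 i a b]

lemma ez_sum {M n : ℤ} (ω : Config) : ∑ m ∈ Finset.Icc M n, ez n m ω ≤ 1 := by
  classical
  by_cases h : ∃ m ∈ Finset.Icc M n, ω m = false ∧ ∀ i, m < i → i ≤ n → ω i = true
  · obtain ⟨m, hm, h1, h2⟩ := h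
    rw [Finset.sum_eq_single_of_mem m hm]
    · unfold ez; split_ifs <;> norm_num
    · intro k hk hkm
      unfold ez
      rw [if_neg]
      rintro ⟨h3, h4⟩
      simp at hm hk
      rcases lt_or_gt_of_ne hkm with h5 | h5
      · rw [h4 m h5 hm.2] at h1; simp at h1
      · rw [h2 k h5 hk.2] at h3; simp at h3
  · rw [Finset.sum_eq_zero]
    · norm_num
    · intro m hm
      unfold ez
      rw [if_neg fun h' => h ⟨m, hm, h'⟩]

lemma ez_cover {M n : ℤ} (ω : Config) (h : ω ∉ noz M n) :
    1 ≤ ∑ m ∈ Finset.Icc M n, ez n m ω := by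
  classical
  simp only [noz, Set.mem_ofPred_eq] at h
  push Not at h
  obtain ⟨i, h1, h2, h3⟩ := h
  set S := (Finset.Icc M n).filter (fun j => ω j = false) with hS
  have hne : S.Nonempty := ⟨i, by simp [hS]; exact ⟨⟨h1, h2⟩, by simpa using h3⟩⟩
  have hm := S.max'_mem hne
  set m := S.max' hne with hmd
  simp only [hS, Finset.mem_filter] at hm
  have h4 : ez n m ω = 1 := by
    unfold ez
    rw [if_pos]
    refine ⟨hm.2, fun j hj hjn => ?_⟩
    by_contra hc
    have : j ∈ S := by
      simp only [hS, Finset.mem_filter, Finset.mem_Icc]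
      have := Finset.mem_Icc.1 hm.1
      exact ⟨⟨by omega, hjn⟩, by simpa using hc⟩
    have := S.le_max' j this
    omega
  rw [← h4]
  exact Finset.single_le_sum (f := fun m => ez n m ω) (fun k _ => ez_nonneg n k ω) hm.1

end East

namespace East

/-! ### Main estimate -/

lemma energy_sum {E : EastProcess} {ν : Measure Config} {L M n : ℤ} :
    gap E * ∑ m ∈ Finset.Icc M n, ∫ ω, ez n m ω *
        (√(Fd E ν n ω) - av E (Finset.Icc L (m - 1)) (fun ω => √(Fd E ν n ω)) ω) ^ 2 ∂E.μ ≤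
      (1 / 2) * ∑ x ∈ Finset.Icc L (n - 1), an E ν n x := by
  have := E.μprob
  have hf : IsCylinder (fun ω => √(Fd E ν n ω)) := cyl_comp Real.sqrt (Fd_cyl E ν n)
  set q : ℤ → Config → ℝ := fun x ω => cc x ω * rr E.p x ω *
      (√(Fd E ν n (flipAt ω x)) - √(Fd E ν n ω)) ^ 2 with hq
  have hqc : ∀ x, IsCylinder (q x) := fun x =>
    cyl_mul (cyl_mul (cc_cyl x) (rr_cyl _ x)) (cyl_pow (cyl_sub (cyl_flip hf x) hf) 2)
  have hq0 : ∀ x ω, 0 ≤ q x ω := fun x ω =>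
    mul_nonneg (mul_nonneg (cc_nonneg x ω) (rr_nonneg E x ω)) (sq_nonneg _)
  have hstep : ∀ m ∈ Finset.Icc M n, gap E * ∫ ω, ez n m ω *
        (√(Fd E ν n ω) - av E (Finset.Icc L (m - 1)) (fun ω => √(Fd E ν n ω)) ω) ^ 2 ∂E.μ ≤
      (1 / 2) * ∑ x ∈ Finset.Icc L (n - 1), ∫ ω, ez n m ω * q x ω ∂E.μ := by
    intro m hm
    have hmn := (Finset.mem_Icc.1 hm).2
    have hd := ez_dep hmn
    refine (var_step E (L := L) (m := m) ⟨_, hd⟩ hf (ez_nonneg n m) (fun ω h => ?_)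
      fun ζ ω => hd _ _ fun x hx => ?_).trans ?_
    · simp [ez, h]
    · have : x ∉ Finset.Icc L (m - 1) := by
        simp at hx ⊢; omega
      simp only [glue, this, if_false]
    · refine mul_le_mul_of_nonneg_left ?_ (by norm_num)
      exact Finset.sum_le_sum_of_subset_of_nonneg
        (Finset.Icc_subset_Icc le_rfl (by omega)) fun x _ _ =>
          integral_nonneg fun ω => mul_nonneg (ez_nonneg n m ω) (hq0 x ω)
  rw [Finset.mul_sum]
  refine (Finset.sum_le_sum hstep).trans ?_
  rw [← Finset.mul_sum, Finset.sum_comm]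
  refine mul_le_mul_of_nonneg_left (Finset.sum_le_sum fun x _ => ?_) (by norm_num)
  rw [← integral_finsetSum _ fun m hm => integ (cyl_mul
    ⟨_, ez_dep (Finset.mem_Icc.1 hm).2⟩ (hqc x)) _]
  refine integral_mono (integ (cyl_sum _ fun m hm => cyl_mul
    ⟨_, ez_dep (Finset.mem_Icc.1 hm).2⟩ (hqc x)) _) (integ (hqc x) _) fun ω => ?_
  show ∑ m ∈ Finset.Icc M n, ez n m ω * q x ω ≤ q x ω
  rw [← Finset.sum_mul]
  exact mul_le_of_le_one_left (hq0 x ω) (ez_sum ω)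

lemma window_bound {E : EastProcess} (hgap : 0 < gap E) {ν : Measure Config} (I : Inv E ν)
    {L M n : ℤ} {ε : ℝ} (hL : 1 ≤ L) (hLM : L ≤ M) (hMn : M ≤ n)
    (hε : ∑ x ∈ Finset.Icc L (n - 1), an E ν n x ≤ ε)
    {b : Config → ℝ} (hb : DependsOnF b ↑(Finset.Icc 1 (M - 1))) (hb0 : ∀ ω, 0 ≤ b ω)
    (hb1 : ∀ ω, b ω ≤ 1) :
    ∫ ω, b ω ∂ν ≤ ν.real (noz M n) + ε / gap E +
      4 * (mm E ^ (Finset.Icc 1 (L - 1)).card)⁻¹ * ∫ ω, b ω ∂E.μ := by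
  have := E.μprob
  have := I.prob
  set f : Config → ℝ := fun ω => √(Fd E ν n ω) with hfd
  have hF := Fd_cyl E ν n
  have hf : IsCylinder f := cyl_comp Real.sqrt hF
  have hbc : IsCylinder b := ⟨_, hb⟩
  set c := mm E ^ (Finset.Icc 1 (L - 1)).card with hc
  have hcpos : 0 < c := pow_pos (mm_pos E) _
  have hec : ∀ m ∈ Finset.Icc M n, IsCylinder (ez n m) := fun m hm =>
    ⟨_, ez_dep (Finset.mem_Icc.1 hm).2⟩
  -- step 1
  have hni : Integrable ((noz M n).indicator (1 : Config → ℝ)) ν :=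
    (integrable_const (1:ℝ)).indicator (meas_noz M n)
  have h1 : ∫ ω, b ω ∂ν ≤ ν.real (noz M n) + ∑ m ∈ Finset.Icc M n, ∫ ω, ez n m ω * b ω ∂ν := by
    rw [← integral_finsetSum _ fun m hm => integ (cyl_mul (hec m hm) hbc) _,
      ← integral_indicator_one (meas_noz M n), ← integral_add
        hni
        (integ (cyl_sum _ fun m hm => cyl_mul (hec m hm) hbc) _)]
    refine integral_mono (integ hbc _) (hni.add
        (integ (cyl_sum _ fun m hm => cyl_mul (hec m hm) hbc) _)) fun ω => ?_
    show b ω ≤ (noz M n).indicator 1 ω + ∑ m ∈ Finset.Icc M n, ez n m ω * b ω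
    rw [← Finset.sum_mul]
    by_cases h : ω ∈ noz M n
    · rw [Set.indicator_of_mem h]
      have := Finset.sum_nonneg fun m (_ : m ∈ Finset.Icc M n) => ez_nonneg n m ω
      have := mul_nonneg this (hb0 ω)
      have := hb1 ω
      simp only [Pi.one_apply]; linarith
    · rw [Set.indicator_of_notMem h]
      have := mul_le_mul_of_nonneg_right (ez_cover ω h) (hb0 ω)
      linarith
  -- step 2
  have h2 : ∀ m ∈ Finset.Icc M n, ∫ ω, ez n m ω * b ω ∂ν ≤
      2 * (∫ ω, ez n m ω * (f ω - av E (Finset.Icc L (m - 1)) f ω) ^ 2 ∂E.μ) +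
      2 * (c⁻¹ * ((∫ ω, b ω ∂E.μ) * ∫ ω, ez n m ω * Fd E ν n ω ∂E.μ)) := by
    intro m hm
    have hmm := Finset.mem_Icc.1 hm
    have hd := ez_dep hmm.2
    set W := Finset.Icc L (m - 1)
    have hdep : DependsOnF (fun ω => ez n m ω * b ω) ↑(Finset.Icc 1 n) := fun ω ω' h => by
      show ez n m ω * b ω = ez n m ω' * b ω'
      rw [hd ω ω' fun x hx => h x (by simp at hx ⊢; omega),
        hb ω ω' fun x hx => h x (by simp at hx ⊢; omega)]
    rw [gd_int E ν hdep]
    have hav := av_cyl E W hf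
    have havF := av_cyl E W hF
    have h3 : ∫ ω, gd E ν n ω * (ez n m ω * b ω) ∂E.μ ≤
        ∫ ω, (2 * (ez n m ω * (f ω - av E W f ω) ^ 2) +
          2 * (ez n m ω * b ω * av E W (Fd E ν n) ω)) ∂E.μ := by
      refine integral_mono (integ (cyl_mul (gd_cyl E ν n) (cyl_mul (hec m hm) hbc)) _)
        (integ (cyl_add (cyl_mul (cyl_const _) (cyl_mul (hec m hm) (cyl_pow (cyl_sub hf hav) 2)))
          (cyl_mul (cyl_const _) (cyl_mul (cyl_mul (hec m hm) hbc) havF))) _) fun ω => ?_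
      show gd E ν n ω * (ez n m ω * b ω) ≤ 2 * (ez n m ω * (f ω - av E W f ω) ^ 2) +
          2 * (ez n m ω * b ω * av E W (Fd E ν n) ω)
      have hj : av E W f ω ^ 2 ≤ av E W (Fd E ν n) ω := by
        refine (sq_int_le E (cyl_glue hf W ω)).trans (le_of_eq ?_)
        refine integral_congr_ae (ae_of_all _ fun ζ => ?_)
        exact Real.sq_sqrt (Fd_pos E ν n _).le
      have hsq : Fd E ν n ω = f ω ^ 2 := (Real.sq_sqrt (Fd_pos E ν n _).le).symm
      have hg : gd E ν n ω ≤ f ω ^ 2 := by rw [← hsq]; unfold Fd; linarith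
      have he0 := ez_nonneg n m ω
      have hb0' := hb0 ω
      have hb1' := hb1 ω
      have hs : f ω ^ 2 ≤ 2 * (f ω - av E W f ω) ^ 2 + 2 * av E W (Fd E ν n) ω := by
        nlinarith [sq_nonneg (f ω - 2 * av E W f ω)]
      have heb := mul_nonneg he0 hb0'
      have k1 := mul_le_mul_of_nonneg_right (hg.trans hs) heb
      have k2 : ez n m ω * b ω * (f ω - av E W f ω) ^ 2 ≤ ez n m ω * (f ω - av E W f ω) ^ 2 :=
        mul_le_mul_of_nonneg_right (mul_le_of_le_one_right he0 hb1') (sq_nonneg _)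
      nlinarith
    refine h3.trans ?_
    rw [integral_add (integ (cyl_mul (cyl_const _) (cyl_mul (hec m hm)
      (cyl_pow (cyl_sub hf hav) 2))) _) (integ (cyl_mul (cyl_const _)
      (cyl_mul (cyl_mul (hec m hm) hbc) havF)) _), integral_const_mul, integral_const_mul]
    have h4 := decouple E hL hLM hmm.1 hd hF hb (ez_nonneg n m) hb0
      (fun ω => (Fd_pos E ν n ω).le)
    have h5 : ∫ ω, ez n m ω * b ω * av E W (Fd E ν n) ω ∂E.μ ≤
        c⁻¹ * ((∫ ω, b ω ∂E.μ) * ∫ ω, ez n m ω * Fd E ν n ω ∂E.μ) := by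
      rw [le_inv_mul_iff₀ hcpos]; exact h4
    linarith
  have h6 := Finset.sum_le_sum h2
  rw [Finset.sum_add_distrib, ← Finset.mul_sum, ← Finset.mul_sum, ← Finset.mul_sum,
    ← Finset.mul_sum] at h6
  have h7 : ∑ m ∈ Finset.Icc M n, ∫ ω, ez n m ω * Fd E ν n ω ∂E.μ ≤ 2 := by
    rw [← Fd_total E ν n, ← integral_finsetSum _ fun m hm => integ (cyl_mul (hec m hm) hF) _]
    refine integral_mono (integ (cyl_sum _ fun m hm => cyl_mul (hec m hm) hF) _)
      (integ hF _) fun ω => ?_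
    show ∑ m ∈ Finset.Icc M n, ez n m ω * Fd E ν n ω ≤ _
    rw [← Finset.sum_mul]
    exact mul_le_of_le_one_left (Fd_pos E ν n ω).le (ez_sum ω)
  have h8 := energy_sum (E := E) (ν := ν) (L := L) (M := M) (n := n)
  set X := ∑ m ∈ Finset.Icc M n, ∫ ω, ez n m ω *
    (f ω - av E (Finset.Icc L (m - 1)) f ω) ^ 2 ∂E.μ with hX
  have h9 : 2 * X ≤ ε / gap E := by
    rw [le_div_iff₀ hgap]
    have : gap E * X ≤ 1 / 2 * ∑ x ∈ Finset.Icc L (n - 1), an E ν n x := h8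
    linarith
  have hbi : 0 ≤ ∫ ω, b ω ∂E.μ := integral_nonneg hb0
  have h10 := mul_le_mul_of_nonneg_left h7 (mul_nonneg (inv_nonneg.2 hcpos.le) hbi)
  linarith

/-- Uniform absolute continuity on cylinders. -/
lemma uniform_ac {E : EastProcess} (hgap : 0 < gap E) {ν : Measure Config} (I : Inv E ν)
    {ε : ℝ} (hε : 0 < ε) : ∃ C : ℝ, 0 ≤ C ∧ ∀ (K : ℤ) (b : Config → ℝ),
      DependsOnF b ↑(Finset.Icc 1 K) → (∀ ω, 0 ≤ b ω) → (∀ ω, b ω ≤ 1) →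
      ∫ ω, b ω ∂ν ≤ ε + C * ∫ ω, b ω ∂E.μ := by
  obtain ⟨L, hL, hLn⟩ := tail_energy I (mul_pos hε hgap)
  refine ⟨4 * (mm E ^ (Finset.Icc 1 (L - 1)).card)⁻¹, by
    have := mm_pos E; positivity, fun K b hb hb0 hb1 => ?_⟩
  set M := max L (K + 1) with hM
  have hb' : DependsOnF b ↑(Finset.Icc 1 (M - 1)) := dep_mono hb (by
    intro x hx; simp at hx ⊢; omega)
  have ht := factB hgap I M
  have ht2 := ht.add_const (ε * gap E / gap E +
    4 * (mm E ^ (Finset.Icc 1 (L - 1)).card)⁻¹ * ∫ ω, b ω ∂E.μ)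
  rw [zero_add, mul_div_cancel_right₀ _ hgap.ne'] at ht2
  refine ge_of_tendsto ht2 ?_
  filter_upwards [eventually_ge_atTop M.toNat] with n hn
  have hMn : M ≤ n := by omega
  have := window_bound hgap I hL (le_max_left _ _) hMn (hLn n) hb' hb0 hb1
  rw [mul_div_cancel_right₀ _ hgap.ne'] at this
  linarith

/-! ### Conclusion -/

/-- Replace the configuration on the left by the frozen front. -/
def tau (ω : Config) : Config := fun x => if x < 0 then true else if x = 0 then false else ω x

lemma meas_tau : Measurable tau := by
  refine measurable_pi_lambda _ fun x => ?_
  unfold tau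
  split_ifs
  · fun_prop
  · fun_prop
  · fun_prop

lemma map_tau_nu {ν : Measure Config} [IsProbabilityMeasure ν] (h : ν LO₀ = 1) :
    ν.map tau = ν := by
  have : tau =ᵐ[ν] id := by
    filter_upwards [ae_LO₀ h] with ω hω
    obtain ⟨h0, h1⟩ := LO₀_iff.1 hω
    funext x
    simp only [tau, id]
    split_ifs with a b
    · exact (h1 x a).symm
    · rw [b, h0]
    · rfl
  rw [Measure.map_congr this, Measure.map_id]

lemma map_tau_mu (E : EastProcess) {μt : Measure Config} (h : IsMuTilde E.p μt) :
    E.μ.map tau = μt := by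
  have := E.μprob
  have := h.1
  have : IsFiniteMeasure (E.μ.map tau) := inferInstance
  refine ext_of_cyl fun S σ => ?_
  rw [Measure.map_apply meas_tau (meas_cyl _ _)]
  refine Eq.trans ?_ (h.2 S σ).symm
  by_cases hg : ∀ x ∈ S, x ≤ 0 → (σ x = decide (x < 0))
  · have : tau ⁻¹' cyl S σ = cyl (S.filter (fun x => 0 < x)) σ := by
      ext ω
      simp only [cyl, Set.mem_preimage, Set.mem_ofPred_eq, Finset.mem_filter, tau]
      constructor
      · intro hh x hx
        have := hh x hx.1
        rwa [if_neg (by omega), if_neg (by omega)] at this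
      · intro hh x hx
        split_ifs with a b
        · rw [hg x hx a.le]; simp [a]
        · rw [hg x hx b.le]; simp [b]
        · exact hh x ⟨hx, by omega⟩
    rw [this, μ_cyl, Finset.prod_filter]
    refine Finset.prod_congr rfl fun x hx => ?_
    by_cases a : x < 0
    · have := hg x hx a.le
      simp [a] at this
      simp [a, this, a.le]
    · by_cases b : x = 0
      · have := hg x hx b.le
        simp [b] at this
        simp [b, this]
      · rw [if_pos (by omega), if_neg a, if_neg b]
  · push Not at hg
    obtain ⟨x, hx, h0, h1⟩ := hg
    have h2 : tau ⁻¹' cyl S σ = ∅ := by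
      ext ω
      simp only [cyl, Set.mem_preimage, Set.mem_ofPred_eq, Set.mem_empty_iff_false, iff_false]
      intro hh
      apply h1
      rw [← hh x hx]
      by_cases a : x < 0
      · simp [tau, a]
      · have : x = 0 := by omega
        simp [tau, this]
    rw [h2, measure_empty]
    symm
    refine Finset.prod_eq_zero hx ?_
    by_cases a : x < 0
    · simp [a] at h1 ⊢
      simp [h1]
    · have b : x = 0 := by omega
      simp [b] at h1 ⊢
      simp [h1]

lemma cyl_bound {E : EastProcess} (hgap : 0 < gap E) {ν : Measure Config} (I : Inv E ν)
    {μt : Measure Config} (ht : IsMuTilde E.p μt)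
    {ε : ℝ} (hε : 0 < ε) : ∃ C : ℝ, 0 ≤ C ∧ ∀ B ∈ measurableCylinders (fun _ : ℤ => Bool),
      ν.real B ≤ ε + C * μt.real B := by
  have := I.prob
  have := E.μprob
  obtain ⟨C, hC, h⟩ := uniform_ac hgap I hε
  refine ⟨C, hC, fun B hB => ?_⟩
  have hBm : MeasurableSet B := MeasurableSet.of_mem_measurableCylinders hB
  obtain ⟨S, T, hT, rfl⟩ := (mem_measurableCylinders _).1 hB
  set B : Set Config := cylinder (α := fun _ : ℤ => Bool) S T with hBd
  have hKex : ∃ K : ℤ, ∀ x ∈ S, x ≤ K := S.exists_le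
  obtain ⟨K, hK⟩ := hKex
  have hm : MeasurableSet (tau ⁻¹' B) := meas_tau hBm
  have key := h K ((tau ⁻¹' B).indicator 1) ?_ ?_ ?_
  · rw [integral_indicator_one hm, integral_indicator_one hm] at key
    rw [← map_tau_nu I.lo, ← map_tau_mu E ht]
    simp only [Measure.real, Measure.map_apply meas_tau hBm] at key ⊢
    exact key
  · intro ω ω' hh
    have : tau ω ∈ B ↔ tau ω' ∈ B := by
      rw [hBd, mem_cylinder, mem_cylinder]
      have : S.restrict (tau ω) = S.restrict (tau ω') := by
        funext ⟨x, hx⟩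
        simp only [Finset.restrict, tau]
        split_ifs with a b
        · rfl
        · rfl
        · exact hh x (by have := hK x hx; simp; omega)
      exact iff_of_eq (congrArg (· ∈ T) this)
    by_cases hc : tau ω ∈ B
    · rw [Set.indicator_of_mem (show ω ∈ tau ⁻¹' B from hc),
        Set.indicator_of_mem (show ω' ∈ tau ⁻¹' B from this.1 hc)]; rfl
    · rw [Set.indicator_of_notMem (show ω ∉ tau ⁻¹' B from hc),
        Set.indicator_of_notMem (show ω' ∉ tau ⁻¹' B from fun h => hc (this.2 h))]
  · intro ω; exact Set.indicator_nonneg (fun _ _ => zero_le_one) _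
  · intro ω
    exact Set.indicator_le_self' (fun _ _ => zero_le_one) ω

theorem ac_main {E : EastProcess} (hgap : 0 < gap E) {ν : Measure Config} (I : Inv E ν)
    {μt : Measure Config} (ht : IsMuTilde E.p μt) {A : Set Config} (hA : MeasurableSet A)
    (h0 : μt A = 0) : ν A = 0 := by
  have := I.prob
  have := ht.1
  have halg : IsSetAlgebra (measurableCylinders (fun _ : ℤ => Bool)) :=
    { empty_mem := empty_mem_measurableCylinders _
      compl_mem := fun _ h => compl_mem_measurableCylinders h
      union_mem := fun _ _ h h' => union_mem_measurableCylinders h h' }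
  have hd := Measure.MeasureDense.of_generateFrom_isSetAlgebra_finite (ν + μt) halg
    (generateFrom_measurableCylinders).symm
  have hle : ν.real A ≤ 0 := by
    refine le_of_forall_pos_le_add fun ε hε => ?_
    obtain ⟨C, hC, hB⟩ := cyl_bound hgap I ht (half_pos hε)
    set δ := ε / (2 * (C + 1)) with hδd
    have hδ : 0 < δ := by positivity
    obtain ⟨B, hBm, hAB⟩ := hd.approx A hA (measure_ne_top _ _) δ hδ
    have hBmm : MeasurableSet B := MeasurableSet.of_mem_measurableCylinders hBm
    have h1 : (ν + μt).real (symmDiff A B) < δ := by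
      rw [Measure.real, ← ENNReal.toReal_ofReal hδ.le]
      exact ENNReal.toReal_strict_mono ENNReal.ofReal_ne_top hAB
    rw [measureReal_add_apply] at h1
    have h2 : ν.real A ≤ ν.real B + ν.real (symmDiff A B) :=
      (measureReal_mono (fun ω hω => by
        by_cases h : ω ∈ B
        · exact Or.inl h
        · exact Or.inr (Or.inl ⟨hω, h⟩))).trans (measureReal_union_le _ _)
    have h3 : μt.real B ≤ μt.real A + μt.real (symmDiff A B) :=
      (measureReal_mono (fun ω hω => by
        by_cases h : ω ∈ A
        · exact Or.inl h
        · exact Or.inr (Or.inr ⟨hω, h⟩))).trans (measureReal_union_le _ _)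
    have h4 : μt.real A = 0 := by simp [Measure.real, h0]
    have h5 := hB B hBm
    have h6 : 0 ≤ ν.real (symmDiff A B) := measureReal_nonneg
    have h7 : 0 ≤ μt.real (symmDiff A B) := measureReal_nonneg
    have h8 : (C + 1) * δ = ε / 2 := by rw [hδd]; field_simp
    nlinarith
  have h9 : ν.real A = 0 := le_antisymm hle measureReal_nonneg
  exact (measureReal_eq_zero_iff).1 h9

end East

/-- **Absolute continuity of the invariant measure w.r.t. `μ̃`**
(Proposition 5.3(2) of the paper): if `ν` is the invariant measure of the process seen from
the front, then every measurable set `A` with `μ̃(A) = 0` satisfies `ν(A) = 0`. -/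
theorem invariant_measure_absolutely_continuous (E : EastProcess) (hgap : 0 < gap E)
    (μt : Measure Config) (hμt : IsMuTilde E.p μt)
    (ν : Measure Config) (hν : IsProbabilityMeasure ν) (hν0 : ν LO₀ = 1)
    (hinv : ∀ t : ℝ, 0 ≤ t → Qt E t ν = ν)
    (huniq : ∀ ν' : Measure Config, IsProbabilityMeasure ν' → ν' LO₀ = 1 →
      (∀ t : ℝ, 0 ≤ t → Qt E t ν' = ν') → ν' = ν) :
    ∀ A : Set Config, MeasurableSet A → μt A = 0 → ν A = 0 := by
  exact fun A hA h0 => East.ac_main hgap ⟨hν, hν0, hinv⟩ hμt hA h0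

end
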